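/- arXiv:2106.03120 — 5 statements merged into one kernel-verified Lean document; each statement's English description precedes it below -/
import Mathlib

section
/- Let (𝔩,𝔪) be a permissible pair, with 𝔪 = Σ_{i∈I} Δ_i and 𝔩 = Σ_{j∈J} Δ_j as in the standing notation. Let i ∈ I be an index and n an integer with 𝔡(i) < n ≤ 𝔡'(i). Then there exists an index i(n) ∈ I such that Δ_{i(n)} ≪ Δ_i and 𝔡(i(n)) = n. -/
/-!
The depth satisfies the recursion `𝔡(a) = min(𝔡'(a), min {𝔡(b) - 1 : b ≪ a})`: a chain starting at
`a` is either trivial, or consists of a step to some `b ≪ a` followed by a chain starting at `b`.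
Hence, as long as `𝔡(a) < 𝔡'(a)`, some step `b ≪ a` raises the depth by exactly one. Such a step
does not decrease `𝔡'`, so it can be repeated until the depth reaches any prescribed value in
`(𝔡(a), 𝔡'(a)]`.
-/

/-- A *segment* `Δ(a,b)`: a pair of integers `a ≤ b`.  `b` is the begin point
and `e` the end point. -/
structure Segment where
  b : ℤ
  e : ℤ
  le : b ≤ e

namespace Segment

/-- `Δ₁ ≪ Δ₂` : `b(Δ₁) < b(Δ₂)` and `e(Δ₁) < e(Δ₂)`. -/
def ll (Δ₁ Δ₂ : Segment) : Prop := Δ₁.b < Δ₂.b ∧ Δ₁.e < Δ₂.e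

/-- `Δ₁ ≺ Δ₂` : `b(Δ₁) < b(Δ₂)`, `e(Δ₁) < e(Δ₂)` and `e(Δ₁) ≥ b(Δ₂) - 1`. -/
def prec (Δ₁ Δ₂ : Segment) : Prop := Δ₁.b < Δ₂.b ∧ Δ₁.e < Δ₂.e ∧ Δ₂.b - 1 ≤ Δ₁.e

/-- `⁻Δ = Δ(a-1, b-1)`. -/
def shiftDown (Δ : Segment) : Segment := ⟨Δ.b - 1, Δ.e - 1, by have := Δ.le; omega⟩

end Segment

/-- The standing data of the inverse Knuth–Viennot algorithm: a nonzero multisegment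
`𝔪 = Σ_{i ∈ I} Δ_i` indexed by `I = Fin n` (linearly ordered compatibly with begin
points, ties broken by reversed end points), and a ladder multisegment
`𝔩 = Σ_{t ∈ J} Δ_{j_t}` indexed by `J = Fin l` (`jseg t` is the segment `Δ_{j_{t+1}}`,
enumerated so that `Δ_{j_l} ≪ ⋯ ≪ Δ_{j_1}`), such that the pair `(𝔩, 𝔪)` is
permissible. -/
structure KVData where
  n : ℕ
  l : ℕ
  npos : 0 < n
  lpos : 0 < l
  iseg : Fin n → Segment
  jseg : Fin l → Segment
  iOrder : ∀ i₁ i₂ : Fin n, i₂ < i₁ →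
    (iseg i₂).b < (iseg i₁).b ∨ ((iseg i₂).b = (iseg i₁).b ∧ (iseg i₁).e ≤ (iseg i₂).e)
  ladder : ∀ t t' : Fin l, t < t' → Segment.ll (jseg t') (jseg t)
  permissible : ∀ (m : ℕ) (c : Fin m → Fin n),
    (∀ r s : Fin m, r < s → Segment.ll (iseg (c s)) (iseg (c r))) →
    ∃ φ : Fin m → Fin l, StrictMono φ ∧
      ∀ t : Fin m, Segment.prec (Segment.shiftDown (iseg (c t))) (jseg (φ t))

namespace KVData

variable (D : KVData)

/-- The segment attached to an index in `I ⊔ J`. -/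
def segOf : Fin D.n ⊕ Fin D.l → Segment := Sum.elim D.iseg D.jseg

/-- The set `{t : ⁻Δ_i ≪ Δ_{j_t}}` (0-based positions in the ladder `𝔩`). -/
def dPrimeSet (i : Fin D.n) : Set ℕ :=
  {t : ℕ | ∃ h : t < D.l, Segment.ll (Segment.shiftDown (D.iseg i)) (D.jseg ⟨t, h⟩)}

/-- The set `{𝔡'(i_k) - k : i = i_0, Δ_{i_{r+1}} ≪ Δ_{i_r}}` whose minimum is `𝔡(i)`. -/
def depthSet (d' : Fin D.n → ℕ) (i : Fin D.n) : Set ℤ :=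
  {z : ℤ | ∃ (k : ℕ) (c : ℕ → Fin D.n), c 0 = i ∧
    (∀ r < k, Segment.ll (D.iseg (c (r + 1))) (D.iseg (c r))) ∧
    z = (d' (c k) : ℤ) - (k : ℤ)}

/-- `d'` is the function `𝔡'` and `d` the depth function `𝔡` on `I ⊔ J`
(`𝔡'(i) = max{t : ⁻Δ_i ≪ Δ_{j_t}}`, `𝔡(i) = min{𝔡'(i_k) - k}`, `𝔡(j_t) = t`). -/
def DepthSpec (d' : Fin D.n → ℕ) (d : Fin D.n ⊕ Fin D.l → ℤ) : Prop :=
  (∀ i, IsGreatest (D.dPrimeSet i) (d' i)) ∧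
  (∀ i, IsLeast (D.depthSet d' i) (d (Sum.inl i))) ∧
  (∀ t : Fin D.l, d (Sum.inr t) = (t : ℤ))

/-- `σ` is the permutation of `I ⊔ J` whose disjoint cycles are `(i_1, …, i_s, j_t)`
where `{i_1 > … > i_s} ∪ {j_t} = 𝔡⁻¹(t)`:  an element `i ∈ I` is sent to the largest
element of `I` below it in its fiber of `𝔡`, or to the `J`-element of the fiber if
there is none; the `J`-element of a fiber is sent to the largest `I`-element of the
fiber, or to itself if there is none. -/
def SigmaSpec (d : Fin D.n ⊕ Fin D.l → ℤ) (σ : Equiv.Perm (Fin D.n ⊕ Fin D.l)) : Prop :=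
  (∀ i : Fin D.n,
    (∃ i' : Fin D.n,
        IsGreatest {i'' : Fin D.n | i'' < i ∧ d (Sum.inl i'') = d (Sum.inl i)} i' ∧
        σ (Sum.inl i) = Sum.inl i')
    ∨ ((¬ ∃ i'' : Fin D.n, i'' < i ∧ d (Sum.inl i'') = d (Sum.inl i)) ∧
        ∃ t : Fin D.l, (t : ℤ) = d (Sum.inl i) ∧ σ (Sum.inl i) = Sum.inr t)) ∧
  (∀ t : Fin D.l,
    (∃ i : Fin D.n,
        IsGreatest {i' : Fin D.n | d (Sum.inl i') = (t : ℤ)} i ∧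
        σ (Sum.inr t) = Sum.inl i)
    ∨ ((¬ ∃ i : Fin D.n, d (Sum.inl i) = (t : ℤ)) ∧ σ (Sum.inr t) = Sum.inr t))

/-- `e(Δ♣_x) ≠ e(Δ_x)`, i.e. the end point changes at `x`
(recall `Δ♣_x = Δ(b(Δ_x), e(Δ_{σ(x)}))`). -/
def breaksEnd (σ : Equiv.Perm (Fin D.n ⊕ Fin D.l)) (x : Fin D.n ⊕ Fin D.l) : Prop :=
  (D.segOf (σ x)).e ≠ (D.segOf x).e

/-- `vee` is the map `x ↦ x^∨`:  `x^∨ = σ^{-r}(x)` for the least `r ≥ 1` such that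
`e(Δ♣_{σ^{-r}(x)}) ≠ e(Δ_{σ^{-r}(x)})`, and `x^∨ = j_{𝔡(x)}` if no such `r` exists. -/
def VeeSpec (d : Fin D.n ⊕ Fin D.l → ℤ) (σ : Equiv.Perm (Fin D.n ⊕ Fin D.l))
    (vee : Fin D.n ⊕ Fin D.l → Fin D.n ⊕ Fin D.l) : Prop :=
  ∀ x : Fin D.n ⊕ Fin D.l,
    ((∃ r : ℕ, 1 ≤ r ∧ D.breaksEnd σ ((⇑σ.symm)^[r] x)) →
      ∃ r : ℕ, 1 ≤ r ∧ vee x = (⇑σ.symm)^[r] x ∧ D.breaksEnd σ ((⇑σ.symm)^[r] x) ∧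
        ∀ r' : ℕ, 1 ≤ r' → r' < r → ¬ D.breaksEnd σ ((⇑σ.symm)^[r'] x)) ∧
    ((¬ ∃ r : ℕ, 1 ≤ r ∧ D.breaksEnd σ ((⇑σ.symm)^[r] x)) →
      ∃ t : Fin D.l, (t : ℤ) = d x ∧ vee x = Sum.inr t)

/-- The multisegment `𝔪` of the data. -/
def mSeg : Multiset Segment := Multiset.map D.iseg Finset.univ.val

/-- The ladder multisegment `𝔩` of the data. -/
def lSeg : Multiset Segment := Multiset.map D.jseg Finset.univ.val

end KVData

namespace Segment

variable {Δ₁ Δ₂ Δ₃ : Segment}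

theorem ll.trans (h₁₂ : Δ₁.ll Δ₂) (h₂₃ : Δ₂.ll Δ₃) : Δ₁.ll Δ₃ :=
  ⟨h₁₂.1.trans h₂₃.1, h₁₂.2.trans h₂₃.2⟩

theorem ll.shiftDown (h : Δ₁.ll Δ₂) : Δ₁.shiftDown.ll Δ₂.shiftDown :=
  ⟨sub_lt_sub_right h.1 1, sub_lt_sub_right h.2 1⟩

end Segment

namespace KVData

variable (D : KVData)

theorem dPrimeSet_subset_of_ll {i j : Fin D.n} (hji : (D.iseg j).ll (D.iseg i)) :
    D.dPrimeSet i ⊆ D.dPrimeSet j :=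
  fun _ ⟨ht, hit⟩ ↦ ⟨ht, hji.shiftDown.trans hit⟩

theorem dPrime_le_of_ll {d' : Fin D.n → ℕ} (hd' : ∀ i, IsGreatest (D.dPrimeSet i) (d' i))
    ⦃i j : Fin D.n⦄ (hji : (D.iseg j).ll (D.iseg i)) : (d' i : ℤ) ≤ d' j :=
  Int.ofNat_le.2 ((hd' i).mono (hd' j) (D.dPrimeSet_subset_of_ll hji))

end KVData

section ChainDepth

variable {α : Type*} {r : α → α → Prop} {w d : α → ℤ} {a : α} {z : ℤ}

/-- The values `w (c k) - k` over all finite descending `r`-chains `c 0 = a, c 1, …, c k`; the depth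
of `a` with respect to the weight `w` is the least of them. As in `KVData.depthSet`, chains are
infinite sequences of which only the first `k + 1` terms matter. -/
def chainDepthSet (r : α → α → Prop) (w : α → ℤ) (a : α) : Set ℤ :=
  {z | ∃ (k : ℕ) (c : ℕ → α), c 0 = a ∧ (∀ s < k, r (c (s + 1)) (c s)) ∧ z = w (c k) - k}

theorem mem_chainDepthSet_iff :
    z ∈ chainDepthSet r w a ↔ z = w a ∨ ∃ b, r b a ∧ z + 1 ∈ chainDepthSet r w b := by
  constructor
  · rintro ⟨_ | k, c, rfl, hc, rfl⟩
    · simp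
    · refine .inr ⟨c 1, hc 0 k.succ_pos, k, fun s ↦ c (s + 1), rfl, fun s hs ↦ ?_, ?_⟩
      · exact hc (s + 1) (Nat.succ_lt_succ hs)
      · push_cast
        ring
  · rintro (rfl | ⟨b, hba, k, c, rfl, hc, hz⟩)
    · exact ⟨0, fun _ ↦ a, rfl, by simp, by simp⟩
    · refine ⟨k + 1, fun | 0 => a | s + 1 => c s, rfl, ?_, ?_⟩
      · rintro (_ | s) hs
        · exact hba
        · exact hc s (Nat.lt_of_succ_lt_succ hs)
      · push_cast
        linarith

theorem exists_rel_depth_eq_add_one (hd : ∀ a, IsLeast (chainDepthSet r w a) (d a))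
    (ha : d a < w a) : ∃ b, r b a ∧ d b = d a + 1 := by
  obtain h | ⟨b, hba, hb⟩ := mem_chainDepthSet_iff.1 (hd a).1
  · exact absurd h ha.ne
  · have hmem : d b - 1 ∈ chainDepthSet r w a :=
      mem_chainDepthSet_iff.2 (.inr ⟨b, hba, by simpa only [sub_add_cancel] using (hd b).1⟩)
    exact ⟨b, hba, le_antisymm ((hd b).2 hb) (le_sub_iff_add_le.1 ((hd a).2 hmem))⟩

theorem depth_intermediate_chain_general (hw : ∀ ⦃a b⦄, r b a → w a ≤ w b)
    (hd : ∀ a, IsLeast (chainDepthSet r w a) (d a)) (hlt : d a < z) (hle : z ≤ w a) :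
    ∃ b, Relation.TransGen r b a ∧ d b = z := by
  induction hn : (z - d a).toNat generalizing a with
  | zero => omega
  | succ n ih =>
    obtain ⟨b, hba, hb⟩ := exists_rel_depth_eq_add_one hd (hlt.trans_le hle)
    obtain hbz | hbz : d b = z ∨ d b < z := by omega
    · exact ⟨b, .single hba, hbz⟩
    · obtain ⟨x, hxb, hx⟩ := ih hbz (hle.trans (hw hba)) (by omega)
      exact ⟨x, hxb.tail hba, hx⟩

end ChainDepth

/-- Lemma `lem:techdep`.  Let `(𝔩,𝔪)` be a permissible pair and let
`i ∈ I` and `z` be an integer with `𝔡(i) < z ≤ 𝔡'(i)`.  Then there exists `i(z) ∈ I`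
with `Δ_{i(z)} ≪ Δ_i` and `𝔡(i(z)) = z`. -/
theorem depth_intermediate_chain (D : KVData) (d' : Fin D.n → ℕ)
    (d : Fin D.n ⊕ Fin D.l → ℤ) (hdep : D.DepthSpec d' d)
    (i : Fin D.n) (z : ℤ) (h1 : d (Sum.inl i) < z) (h2 : z ≤ (d' i : ℤ)) :
    ∃ i' : Fin D.n, Segment.ll (D.iseg i') (D.iseg i) ∧ d (Sum.inl i') = z := by
  obtain ⟨i', hi', hz⟩ := depth_intermediate_chain_general (D.dPrime_le_of_ll hdep.1) hdep.2.1 h1 h2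
  exact ⟨i', hi'.trans_induction_on (fun h ↦ h) (fun _ _ ↦ Segment.ll.trans), hz⟩
end

section
/- Let (𝔩,𝔪) be a permissible pair with the algorithm notations in place. Let i, i' ∈ I be indices such that e(Δ_i) = e(Δ_{i'}) and b(Δ_i) < b(Δ_{i'}) ≤ b(Δ_{i^∨}). Then 𝔡(i') = 𝔡(i) and Δ♣_{i'} = Δ_{i'}. -/
namespace Segment

/-- The componentwise order on segments, by begin point and end point (not containment). It turns
the condition `⁻Δ₁ ≪ Δ₂` defining `𝔡'` into `Δ₁ ≤ Δ₂`. -/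
instance : Preorder Segment where
  le Δ₁ Δ₂ := Δ₁.b ≤ Δ₂.b ∧ Δ₁.e ≤ Δ₂.e
  le_refl _ := ⟨le_rfl, le_rfl⟩
  le_trans _ _ _ h h' := ⟨h.1.trans h'.1, h.2.trans h'.2⟩

variable {Δ₁ Δ₂ Δ₃ : Segment}

lemma le_iff : Δ₁ ≤ Δ₂ ↔ Δ₁.b ≤ Δ₂.b ∧ Δ₁.e ≤ Δ₂.e := Iff.rfl

lemma ll.le (h : Δ₁.ll Δ₂) : Δ₁ ≤ Δ₂ := ⟨h.1.le, h.2.le⟩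

lemma ll.trans_le (h : Δ₁.ll Δ₂) (h' : Δ₂ ≤ Δ₃) : Δ₁.ll Δ₃ :=
  ⟨h.1.trans_le h'.1, h.2.trans_le h'.2⟩

lemma shiftDown_ll_iff_le : Δ₁.shiftDown.ll Δ₂ ↔ Δ₁ ≤ Δ₂ := by
  simp only [ll, shiftDown, le_iff, Int.sub_one_lt_iff]

end Segment

namespace KVData

variable {D : KVData} {d' : Fin D.n → ℕ} {d : Fin D.n ⊕ Fin D.l → ℤ}
  {σ : Equiv.Perm (Fin D.n ⊕ Fin D.l)} {vee : Fin D.n ⊕ Fin D.l → Fin D.n ⊕ Fin D.l}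

lemma monotone_iseg_b : Monotone fun x ↦ (D.iseg x).b :=
  monotone_iff_forall_lt.2 fun x y hxy ↦ (D.iOrder y x hxy).elim le_of_lt fun h ↦ h.1.le

lemma antitone_jseg : Antitone D.jseg :=
  antitone_iff_forall_lt.2 fun s t hst ↦ (D.ladder s t hst).le

lemma mem_depthSet_iff {x : Fin D.n} {z : ℤ} :
    z ∈ D.depthSet d' x ↔
      z = d' x ∨ ∃ y, (D.iseg y).ll (D.iseg x) ∧ z + 1 ∈ D.depthSet d' y := by
  constructor
  · rintro ⟨_ | k, c, rfl, hc, rfl⟩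
    · exact .inl (by simp)
    · refine .inr ⟨c 1, hc 0 k.succ_pos, k, fun r ↦ c (r + 1), rfl,
        fun r hr ↦ hc (r + 1) (by omega), ?_⟩
      push_cast
      ring
  · rintro (rfl | ⟨y, hyx, k, c, rfl, hc, hz⟩)
    · exact ⟨0, fun _ ↦ x, rfl, by simp, by simp⟩
    · refine ⟨k + 1, fun r ↦ Nat.casesOn r x c, rfl, ?_, ?_⟩
      · rintro (_ | r) hr
        · exact hyx
        · exact hc r (by omega)
      · push_cast
        linarith

namespace DepthSpec

lemma le_dPrime_iff (hdep : D.DepthSpec d' d) {x : Fin D.n} {t : Fin D.l} :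
    (t : ℕ) ≤ d' x ↔ D.iseg x ≤ D.jseg t := by
  constructor
  · intro ht
    obtain ⟨_, hx⟩ := (hdep.1 x).1
    exact (Segment.shiftDown_ll_iff_le.1 hx).trans (antitone_jseg (Fin.le_def.2 ht))
  · exact fun h ↦ (hdep.1 x).2 ⟨t.2, Segment.shiftDown_ll_iff_le.2 h⟩

lemma dPrime_anti (hdep : D.DepthSpec d' d) {x y : Fin D.n} (hxy : D.iseg x ≤ D.iseg y) :
    d' y ≤ d' x := by
  obtain ⟨hl, -⟩ := (hdep.1 y).1
  exact (hdep.le_dPrime_iff (t := ⟨d' y, hl⟩)).2 (hxy.trans (hdep.le_dPrime_iff.1 le_rfl))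

/-- The recursion `𝔡(x) = min (𝔡'(x), min_{Δ_y ≪ Δ_x} 𝔡(y) - 1)`, put as a universal property
because there may be no `Δ_y ≪ Δ_x` to minimize over. -/
lemma le_depth_iff (hdep : D.DepthSpec d' d) {x : Fin D.n} {a : ℤ} :
    a ≤ d (.inl x) ↔ a ≤ d' x ∧ ∀ y, (D.iseg y).ll (D.iseg x) → a < d (.inl y) := by
  have le_iff_forall (x : Fin D.n) (a : ℤ) :
      a ≤ d (.inl x) ↔ ∀ z ∈ D.depthSet d' x, a ≤ z :=
    le_isGLB_iff (hdep.2.1 x).isGLB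
  constructor
  · intro ha
    refine ⟨(le_iff_forall x a).1 ha _ (mem_depthSet_iff.2 (.inl rfl)), fun y hyx ↦ ?_⟩
    have hmem : d (.inl y) - 1 ∈ D.depthSet d' x :=
      mem_depthSet_iff.2 (.inr ⟨y, hyx, by simpa using (hdep.2.1 y).1⟩)
    exact Int.le_sub_one_iff.1 ((le_iff_forall x a).1 ha _ hmem)
  · rintro ⟨hx, hlt⟩
    refine (le_iff_forall x a).2 fun z hz ↦ ?_
    obtain rfl | ⟨y, hyx, hy⟩ := mem_depthSet_iff.1 hz
    · exact hx
    · exact Int.lt_add_one_iff.1 ((hlt y hyx).trans_le ((hdep.2.1 y).2 hy))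

lemma depth_le_dPrime (hdep : D.DepthSpec d' d) (x : Fin D.n) : d (.inl x) ≤ d' x :=
  (hdep.le_depth_iff.1 le_rfl).1

lemma depth_lt_of_ll (hdep : D.DepthSpec d' d) {x y : Fin D.n}
    (hyx : (D.iseg y).ll (D.iseg x)) : d (.inl x) < d (.inl y) :=
  (hdep.le_depth_iff.1 le_rfl).2 y hyx

lemma depth_anti (hdep : D.DepthSpec d' d) {x y : Fin D.n} (hxy : D.iseg x ≤ D.iseg y) :
    d (.inl y) ≤ d (.inl x) :=
  hdep.le_depth_iff.2
    ⟨(hdep.depth_le_dPrime y).trans (mod_cast hdep.dPrime_anti hxy),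
      fun _ hz ↦ hdep.depth_lt_of_ll (hz.trans_le hxy)⟩

lemma segOf_le_jseg (hdep : D.DepthSpec d' d) {w : Fin D.n ⊕ Fin D.l} {t : Fin D.l}
    (ht : t ≤ d w) : D.segOf w ≤ D.jseg t := by
  rcases w with x | s
  · exact hdep.le_dPrime_iff.1 (mod_cast ht.trans (hdep.depth_le_dPrime x))
  · rw [hdep.2.2] at ht
    exact antitone_jseg (Fin.le_def.2 (mod_cast ht))

lemma antitoneOn_iseg_e (hdep : D.DepthSpec d' d) (a : ℤ) :
    AntitoneOn (fun x ↦ (D.iseg x).e) {x | d (.inl x) = a} := by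
  intro x hx y hy hxy
  by_contra! he
  have hb : (D.iseg x).b < (D.iseg y).b := by
    rcases hxy.lt_or_eq with hlt | rfl
    · exact (D.iOrder y x hlt).resolve_right fun h ↦ he.not_ge h.2
    · exact absurd he (lt_irrefl _)
  exact (hdep.depth_lt_of_ll ⟨hb, he⟩).ne (hy.trans hx.symm)

end DepthSpec

namespace SigmaSpec

lemma exists_coe_eq_depth (hσ : D.SigmaSpec d σ) (x : Fin D.n) :
    ∃ t : Fin D.l, t = d (.inl x) := by
  induction x using WellFoundedLT.induction with
  | ind x ih =>
    rcases hσ.1 x with ⟨y, ⟨⟨hlt, hd⟩, -⟩, -⟩ | ⟨-, t, ht, -⟩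
    · rw [← hd]
      exact ih y hlt
    · exact ⟨t, ht⟩

lemma depth_apply (hσ : D.SigmaSpec d σ) (hdep : D.DepthSpec d' d) (w : Fin D.n ⊕ Fin D.l) :
    d (σ w) = d w := by
  rcases w with x | t
  · rcases hσ.1 x with ⟨y, hy, h⟩ | ⟨-, t, ht, h⟩
    · rw [h, hy.1.2]
    · rw [h, hdep.2.2, ht]
  · rcases hσ.2 t with ⟨y, hy, h⟩ | ⟨-, h⟩
    · rw [h, hdep.2.2, hy.1]
    · rw [h]

lemma depth_symm_apply (hσ : D.SigmaSpec d σ) (hdep : D.DepthSpec d' d)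
    (w : Fin D.n ⊕ Fin D.l) : d (σ.symm w) = d w := by
  rw [← hσ.depth_apply hdep (σ.symm w), σ.apply_symm_apply]

lemma exists_symm_apply_eq_inl (hσ : D.SigmaSpec d σ) {x y : Fin D.n} (hxy : x < y)
    (hd : d (.inl x) = d (.inl y)) :
    ∃ p, σ.symm (.inl x) = .inl p ∧ x < p ∧ p ≤ y ∧ d (.inl p) = d (.inl x) := by
  have hx : σ (σ.symm (.inl x)) = .inl x := σ.apply_symm_apply _
  rcases hs : σ.symm (.inl x) with p | t <;> rw [hs] at hx
  · rcases hσ.1 p with ⟨x', hx', h⟩ | ⟨-, t, -, h⟩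
    · obtain rfl : x' = x := Sum.inl_injective (h.symm.trans hx)
      refine ⟨p, rfl, hx'.1.1, ?_, hx'.1.2.symm⟩
      by_contra! hyp
      exact hxy.not_ge (hx'.2 ⟨hyp, hd.symm.trans hx'.1.2⟩)
    · exact absurd (h.symm.trans hx) Sum.inr_ne_inl
  · rcases hσ.2 t with ⟨x', hx', h⟩ | ⟨-, h⟩
    · obtain rfl : x' = x := Sum.inl_injective (h.symm.trans hx)
      exact absurd (hx'.2 (hd.symm.trans hx'.1)) hxy.not_ge
    · exact absurd (h.symm.trans hx) Sum.inr_ne_inl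

lemma e_segOf_apply_eq (hσ : D.SigmaSpec d σ) (hdep : D.DepthSpec d' d) {x y : Fin D.n}
    (hxy : x < y) (hd : d (.inl y) = d (.inl x)) (he : (D.iseg x).e = (D.iseg y).e) :
    (D.segOf (σ (.inl y))).e = (D.iseg y).e := by
  rcases hσ.1 y with ⟨z, ⟨⟨hzy, hdz⟩, hmax⟩, h⟩ | ⟨hmin, -⟩
  · rw [h]
    have hxz : x ≤ z := hmax ⟨hxy, hd.symm⟩
    have hanti := hdep.antitoneOn_iseg_e (d (.inl y))
    exact le_antisymm ((hanti hd.symm hdz hxz).trans he.le) (hanti hdz rfl hzy.le)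
  · exact absurd ⟨x, hxy, hd.symm⟩ hmin

end SigmaSpec

namespace VeeSpec

lemma depth_vee (hvee : D.VeeSpec d σ vee) (hdep : D.DepthSpec d' d) (hσ : D.SigmaSpec d σ)
    (w : Fin D.n ⊕ Fin D.l) : d (vee w) = d w := by
  by_cases hex : ∃ r, 1 ≤ r ∧ D.breaksEnd σ (σ.symm^[r] w)
  · obtain ⟨r, -, hr, -⟩ := (hvee w).1 hex
    have hinv : d ∘ σ.symm = d := funext (hσ.depth_symm_apply hdep)
    rw [hr]
    exact congrFun (Function.iterate_invariant hinv r) w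
  · obtain ⟨t, ht, hw⟩ := (hvee w).2 hex
    rw [hw, hdep.2.2, ht]

lemma vee_eq_iterate (hvee : D.VeeSpec d σ vee) {w : Fin D.n ⊕ Fin D.l} {r : ℕ} (hr : 1 ≤ r)
    (hbreak : D.breaksEnd σ (σ.symm^[r] w))
    (hmin : ∀ s, 1 ≤ s → s < r → ¬ D.breaksEnd σ (σ.symm^[s] w)) :
    vee w = σ.symm^[r] w := by
  obtain ⟨s, hs, hw, hbreak', hmin'⟩ := (hvee w).1 ⟨r, hr, hbreak⟩
  obtain rfl : s = r := le_antisymm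
    (not_lt.1 fun h ↦ hmin' r hr h hbreak) (not_lt.1 fun h ↦ hmin s hs h hbreak')
  exact hw

lemma vee_eq_symm_apply (hvee : D.VeeSpec d σ vee) {w : Fin D.n ⊕ Fin D.l}
    (hw : D.breaksEnd σ (σ.symm w)) : vee w = σ.symm w :=
  hvee.vee_eq_iterate le_rfl hw fun s hs hs' ↦ by omega

lemma vee_eq_vee_symm_apply (hvee : D.VeeSpec d σ vee) (hdep : D.DepthSpec d' d)
    (hσ : D.SigmaSpec d σ) {w : Fin D.n ⊕ Fin D.l} (hw : ¬ D.breaksEnd σ (σ.symm w)) :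
    vee w = vee (σ.symm w) := by
  by_cases hex : ∃ r, 1 ≤ r ∧ D.breaksEnd σ (σ.symm^[r] (σ.symm w))
  · obtain ⟨r, hr, hveer, hbreak, hmin⟩ := (hvee (σ.symm w)).1 hex
    rw [hveer]
    refine hvee.vee_eq_iterate (r := r + 1) (by omega) hbreak fun s hs hsr ↦ ?_
    rcases s with _ | _ | s
    · exact absurd hs (by omega)
    · exact hw
    · exact hmin (s + 1) (by omega) (by omega)
  · have hex' : ¬ ∃ r, 1 ≤ r ∧ D.breaksEnd σ (σ.symm^[r] w) := by
      rintro ⟨_ | _ | r, hr, hbreak⟩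
      · exact absurd hr (by omega)
      · exact hw hbreak
      · exact hex ⟨r + 1, by omega, hbreak⟩
    obtain ⟨s, hs, hws⟩ := (hvee (σ.symm w)).2 hex
    obtain ⟨t, ht, hwt⟩ := (hvee w).2 hex'
    rw [hσ.depth_symm_apply hdep] at hs
    rw [hws, hwt, Fin.ext (mod_cast ht.trans hs.symm : (t : ℕ) = s)]

lemma b_segOf_vee_le (hvee : D.VeeSpec d σ vee) (hdep : D.DepthSpec d' d) (hσ : D.SigmaSpec d σ)
    {x y : Fin D.n} (hd : d (.inl x) = d (.inl y)) (he : (D.iseg y).e < (D.iseg x).e) :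
    (D.segOf (vee (.inl x))).b ≤ (D.iseg y).b := by
  induction x using WellFoundedGT.induction with
  | ind x ih =>
    have hxy : x < y := not_le.1 fun hyx ↦
      (hdep.antitoneOn_iseg_e _ rfl hd hyx).not_gt he
    obtain ⟨p, hp, hxp, hpy, hdp⟩ := hσ.exists_symm_apply_eq_inl hxy hd
    by_cases hbreak : D.breaksEnd σ (σ.symm (.inl x))
    · rw [hvee.vee_eq_symm_apply hbreak, hp]
      exact monotone_iseg_b hpy
    · rw [hvee.vee_eq_vee_symm_apply hdep hσ hbreak, hp]
      have hep : (D.iseg x).e = (D.iseg p).e := by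
        rwa [breaksEnd, not_not, σ.apply_symm_apply, hp] at hbreak
      exact ih p hxp (hdp.trans hd) (he.trans_eq hep)

lemma depth_le_of_b_le_vee (hvee : D.VeeSpec d σ vee) (hdep : D.DepthSpec d' d)
    (hσ : D.SigmaSpec d σ) {x y : Fin D.n} (hb : (D.iseg y).b ≤ (D.segOf (vee (.inl x))).b)
    (he : (D.iseg y).e ≤ (D.iseg x).e) : d (.inl x) ≤ d (.inl y) := by
  induction y using WellFoundedLT.induction with
  | ind y ih =>
    refine hdep.le_depth_iff.2 ⟨?_, fun z ⟨hzb, hze⟩ ↦ ?_⟩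
    · obtain ⟨t, ht⟩ := hσ.exists_coe_eq_depth x
      have hvee_le : D.segOf (vee (.inl x)) ≤ D.jseg t :=
        hdep.segOf_le_jseg (ht.trans (hvee.depth_vee hdep hσ _).symm).le
      have hx_le : D.iseg x ≤ D.jseg t := hdep.segOf_le_jseg (w := .inl x) ht.le
      rw [← ht]
      exact_mod_cast hdep.le_dPrime_iff.2 ⟨hb.trans hvee_le.1, he.trans hx_le.2⟩
    · refine (ih z (monotone_iseg_b.reflect_lt hzb) (hzb.le.trans hb) (hze.le.trans he)).lt_of_ne
        fun hd ↦ ?_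
      exact (hzb.trans_le hb).not_ge (hvee.b_segOf_vee_le hdep hσ hd (hze.trans_le he))

end VeeSpec

end KVData

/-- Lemma `lem:import`(1).  Let `(𝔩,𝔪)` be a permissible pair with the
algorithm notations in place.  Let `i, i' ∈ I` be indices such that `e(Δ_i) = e(Δ_{i'})`
and `b(Δ_i) < b(Δ_{i'}) ≤ b(Δ_{i^∨})`.  Then `𝔡(i') = 𝔡(i)` and `Δ♣_{i'} = Δ_{i'}`
(the latter amounts to `e(Δ_{σ(i')}) = e(Δ_{i'})`, since `b(Δ♣_{i'}) = b(Δ_{i'})`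
always holds). -/
theorem import_lemma_part1 (D : KVData) (d' : Fin D.n → ℕ)
    (d : Fin D.n ⊕ Fin D.l → ℤ) (σ : Equiv.Perm (Fin D.n ⊕ Fin D.l))
    (vee : Fin D.n ⊕ Fin D.l → Fin D.n ⊕ Fin D.l)
    (hdep : D.DepthSpec d' d) (hσ : D.SigmaSpec d σ) (hvee : D.VeeSpec d σ vee)
    (i i' : Fin D.n)
    (he : (D.iseg i).e = (D.iseg i').e)
    (hb1 : (D.iseg i).b < (D.iseg i').b)
    (hb2 : (D.iseg i').b ≤ (D.segOf (vee (Sum.inl i))).b) :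
    d (Sum.inl i') = d (Sum.inl i) ∧ (D.segOf (σ (Sum.inl i'))).e = (D.iseg i').e := by
  have hd : d (Sum.inl i') = d (Sum.inl i) :=
    le_antisymm (hdep.depth_anti ⟨hb1.le, he.le⟩) (hvee.depth_le_of_b_le_vee hdep hσ hb2 he.ge)
  exact ⟨hd, hσ.e_segOf_apply_eq hdep (KVData.monotone_iseg_b.reflect_lt hb1) hd he⟩
end

section
/- Let (𝔩,𝔪) be a permissible pair with the algorithm notations in place. Let i ∈ J and i' ∈ I be indices such that e(Δ_i) = e(Δ_{i'}) and b(Δ_{i'}) ≤ b(Δ_{i^∨}). Then 𝔡(i') = 𝔡(i). -/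
section Descent

variable {α : Type*} {r : α → α → Prop} {f g : α → ℤ}

/-- The values `f (c k) - k` over all finite chains `a = c 0, c 1, …, c k` descending for `r`, so
that the depth `𝔡` is the minimum of this set for `f = 𝔡'` and `r` the relation `≪` between
segments. As in `KVData.depthSet`, a chain is a function on all of `ℕ`, of which only the values up
to `k` matter. -/
def descentValues (r : α → α → Prop) (f : α → ℤ) (a : α) : Set ℤ :=
  {z | ∃ (k : ℕ) (c : ℕ → α), c 0 = a ∧ (∀ i < k, r (c (i + 1)) (c i)) ∧ z = f (c k) - k}

theorem self_mem_descentValues (a : α) : f a ∈ descentValues r f a :=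
  ⟨0, fun _ => a, rfl, by simp, by simp⟩

theorem sub_one_mem_descentValues {a b : α} {z : ℤ} (hba : r b a)
    (hz : z ∈ descentValues r f b) : z - 1 ∈ descentValues r f a := by
  obtain ⟨k, c, rfl, hc, rfl⟩ := hz
  refine ⟨k + 1, fun i => Nat.casesOn i a c, rfl, fun i hi => ?_, ?_⟩
  · cases i with
    | zero => exact hba
    | succ i => exact hc i (Nat.lt_of_succ_lt_succ hi)
  · push_cast
    ring

theorem eq_or_exists_add_one_mem_descentValues {a : α} {z : ℤ}
    (hz : z ∈ descentValues r f a) : z = f a ∨ ∃ b, r b a ∧ z + 1 ∈ descentValues r f b := by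
  obtain ⟨k, c, rfl, hc, rfl⟩ := hz
  cases k with
  | zero => simp
  | succ k =>
    refine .inr ⟨c 1, hc 0 k.succ_pos, k, fun i => c (i + 1), rfl,
      fun i hi => hc (i + 1) (Nat.succ_lt_succ hi), ?_⟩
    push_cast
    ring

theorem eq_or_exists_eq_add_one_of_isLeast_descentValues
    (hg : ∀ a, IsLeast (descentValues r f a) (g a)) (a : α) :
    g a = f a ∨ ∃ b, r b a ∧ g b = g a + 1 := by
  refine (eq_or_exists_add_one_mem_descentValues (hg a).1).imp_right ?_
  rintro ⟨b, hba, hb⟩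
  have hle : g a ≤ g b - 1 := (hg a).2 (sub_one_mem_descentValues hba (hg b).1)
  exact ⟨b, hba, le_antisymm ((hg b).2 hb) (by omega)⟩

theorem exists_rel_eq_of_isLeast_descentValues [IsTrans α r] {a : α} {t : ℤ}
    (hg : ∀ a, IsLeast (descentValues r f a) (g a)) (ha : t ≤ f a) (hr : ∀ b, r b a → t ≤ f b)
    (hlt : g a < t) : ∃ b, r b a ∧ g b = t := by
  rcases eq_or_exists_eq_add_one_of_isLeast_descentValues hg a with heq | ⟨b, hba, hb⟩
  · omega
  · rcases (show g b ≤ t by omega).lt_or_eq with hbt | hbt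
    · obtain ⟨c, hcb, hc⟩ := exists_rel_eq_of_isLeast_descentValues hg (hr b hba)
        (fun c hcb => hr c (_root_.trans hcb hba)) hbt
      exact ⟨c, _root_.trans hcb hba, hc⟩
    · exact ⟨b, hba, hbt⟩
termination_by (t - g a).toNat

end Descent

theorem apply_symm_iterate_eq {α β : Type*} {σ : Equiv.Perm α} {f : α → β} {x : α} {p : ℕ}
    (h : ∀ q, 1 ≤ q → q ≤ p → f (σ (σ.symm^[q] x)) = f (σ.symm^[q] x)) :
    f (σ.symm^[p] x) = f x := by
  induction p with
  | zero => rfl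
  | succ p ih =>
    rw [← h (p + 1) p.succ_pos le_rfl, Function.iterate_succ_apply', Equiv.apply_symm_apply]
    exact ih fun q h1 hq => h q h1 (hq.trans p.le_succ)

namespace Segment

instance : IsTrans Segment ll := ⟨fun _ _ _ h h' => ⟨h.1.trans h'.1, h.2.trans h'.2⟩⟩

theorem shiftDown_ll_iff {Δ₁ Δ₂ : Segment} :
    ll (shiftDown Δ₁) Δ₂ ↔ Δ₁.b ≤ Δ₂.b ∧ Δ₁.e ≤ Δ₂.e := by
  simp only [ll, shiftDown, Int.sub_one_lt_iff]

end Segment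

namespace KVData

variable {D : KVData}

theorem monotone_begin (D : KVData) : Monotone fun i => (D.iseg i).b :=
  monotone_iff_forall_lt.2 fun i₁ i₂ h => (D.iOrder i₂ i₁ h).elim le_of_lt fun h => h.1.le

theorem strictAnti_ladder_begin (D : KVData) : StrictAnti fun t => (D.jseg t).b :=
  fun t t' h => (D.ladder t t' h).1

theorem strictAnti_ladder_end (D : KVData) : StrictAnti fun t => (D.jseg t).e :=
  fun t t' h => (D.ladder t t' h).2

section DPrime

variable {i : Fin D.n} {t : Fin D.l} {m : ℕ}

theorem le_iff_of_isGreatest_dPrimeSet (hm : IsGreatest (D.dPrimeSet i) m) :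
    (t : ℕ) ≤ m ↔ (D.iseg i).b ≤ (D.jseg t).b ∧ (D.iseg i).e ≤ (D.jseg t).e := by
  refine ⟨fun htm => ?_, fun h => hm.2 ⟨t.2, Segment.shiftDown_ll_iff.2 h⟩⟩
  obtain ⟨hml, hll⟩ := hm.1
  have hm_ge := Segment.shiftDown_ll_iff.1 hll
  have ht : t ≤ ⟨m, hml⟩ := htm
  exact ⟨hm_ge.1.trans (D.strictAnti_ladder_begin.antitone ht),
    hm_ge.2.trans (D.strictAnti_ladder_end.antitone ht)⟩

theorem le_of_isGreatest_dPrimeSet_of_end_le (hm : IsGreatest (D.dPrimeSet i) m)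
    (he : (D.jseg t).e ≤ (D.iseg i).e) : m ≤ t := by
  obtain ⟨hml, hll⟩ := hm.1
  have hle : (D.jseg t).e ≤ (D.jseg ⟨m, hml⟩).e := he.trans (Segment.shiftDown_ll_iff.1 hll).2
  exact D.strictAnti_ladder_end.le_iff_ge.1 hle

end DPrime

variable {d' : Fin D.n → ℕ} {d : Fin D.n ⊕ Fin D.l → ℤ} {σ : Equiv.Perm (Fin D.n ⊕ Fin D.l)}
  {vee : Fin D.n ⊕ Fin D.l → Fin D.n ⊕ Fin D.l} {i : Fin D.n} {j : Fin D.l}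

theorem isLeast_descentValues_depth (h : D.DepthSpec d' d) (i : Fin D.n) :
    IsLeast (descentValues (D.iseg ⁻¹'o Segment.ll) (fun i => (d' i : ℤ)) i) (d (Sum.inl i)) :=
  h.2.1 i

theorem depth_le_dPrime (h : D.DepthSpec d' d) (i : Fin D.n) : d (Sum.inl i) ≤ d' i :=
  (isLeast_descentValues_depth h i).2 (self_mem_descentValues i)

theorem begin_le_of_depth_eq (h : D.DepthSpec d' d) {x : Fin D.n ⊕ Fin D.l} (hx : d x = j) :
    (D.segOf x).b ≤ (D.jseg j).b := by
  cases x with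
  | inl i =>
    have hj : (j : ℤ) ≤ d' i := hx ▸ depth_le_dPrime h i
    exact ((le_iff_of_isGreatest_dPrimeSet (h.1 i)).1 (Int.ofNat_le.1 hj)).1
  | inr t =>
    obtain rfl : t = j := Fin.ext (Int.ofNat_inj.1 ((h.2.2 t).symm.trans hx))
    exact le_rfl

theorem exists_ll_depth_eq (h : D.DepthSpec d' d) (hb : (D.iseg i).b ≤ (D.jseg j).b)
    (he : (D.iseg i).e ≤ (D.jseg j).e) (hlt : d (Sum.inl i) < j) :
    ∃ i₂, Segment.ll (D.iseg i₂) (D.iseg i) ∧ d (Sum.inl i₂) = j := by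
  have hd' {i₂ : Fin D.n} (hb₂ : (D.iseg i₂).b ≤ (D.iseg i).b)
      (he₂ : (D.iseg i₂).e ≤ (D.iseg i).e) : (j : ℤ) ≤ d' i₂ :=
    Int.ofNat_le.2 <| (le_iff_of_isGreatest_dPrimeSet (h.1 i₂)).2 ⟨hb₂.trans hb, he₂.trans he⟩
  exact exists_rel_eq_of_isLeast_descentValues (isLeast_descentValues_depth h)
    (hd' le_rfl le_rfl) (fun i₂ hll => hd' hll.1.le hll.2.le) hlt

theorem depth_sigma (h : D.DepthSpec d' d) (hσ : D.SigmaSpec d σ) (x : Fin D.n ⊕ Fin D.l) :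
    d (σ x) = d x := by
  cases x with
  | inl i =>
    rcases hσ.1 i with ⟨i₂, ⟨⟨-, hd⟩, -⟩, hi⟩ | ⟨-, t, ht, hi⟩
    · rw [hi, hd]
    · rw [hi, h.2.2, ht]
  | inr t =>
    rcases hσ.2 t with ⟨i, ⟨hd, -⟩, ht⟩ | ⟨-, ht⟩
    · rw [ht, h.2.2, hd]
    · rw [ht]

theorem depth_vee (h : D.DepthSpec d' d) (hσ : D.SigmaSpec d σ) (hvee : D.VeeSpec d σ vee)
    (x : Fin D.n ⊕ Fin D.l) : d (vee x) = d x := by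
  by_cases hbr : ∃ r : ℕ, 1 ≤ r ∧ D.breaksEnd σ (σ.symm^[r] x)
  · obtain ⟨r, -, hv, -⟩ := (hvee x).1 hbr
    rw [hv]
    exact apply_symm_iterate_eq fun q _ _ => depth_sigma h hσ _
  · obtain ⟨t, ht, hv⟩ := (hvee x).2 hbr
    rw [hv, h.2.2, ht]

theorem exists_vee_eq_symm_iterate (hvee : D.VeeSpec d σ vee) {x : Fin D.n ⊕ Fin D.l} {p : ℕ}
    (he : (D.segOf (σ.symm^[p] x)).e ≠ (D.segOf x).e) :
    ∃ r, 1 ≤ r ∧ r ≤ p ∧ vee x = σ.symm^[r] x := by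
  obtain ⟨q, hq, hqp, hbr⟩ : ∃ q, 1 ≤ q ∧ q ≤ p ∧ D.breaksEnd σ (σ.symm^[q] x) := by
    contrapose! he
    exact apply_symm_iterate_eq (f := fun y => (D.segOf y).e) fun q hq hqp =>
      not_not.1 (he q hq hqp)
  obtain ⟨r, hr, hv, -, hmin⟩ := (hvee x).1 ⟨q, hq, hbr⟩
  have hrq : r ≤ q := not_lt.1 fun hlt => hmin q hq hlt hbr
  exact ⟨r, hr, hrq.trans hqp, hv⟩

theorem exists_sigma_symm_eq_inl (hσ : D.SigmaSpec d σ) (i : Fin D.n) :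
    (∃ i₂ < i, d (Sum.inl i₂) = d (Sum.inl i) ∧ σ.symm (Sum.inl i₂) = Sum.inl i) ∨
      ∃ t : Fin D.l, (t : ℤ) = d (Sum.inl i) ∧ σ.symm (Sum.inr t) = Sum.inl i := by
  simp only [Equiv.symm_apply_eq]
  rcases hσ.1 i with ⟨i₂, ⟨⟨hlt, hd⟩, -⟩, hi⟩ | ⟨-, t, ht, hi⟩
  · exact .inl ⟨i₂, hlt, hd, hi.symm⟩
  · exact .inr ⟨t, ht, hi.symm⟩

theorem exists_symm_iterate_eq_inl (hσ : D.SigmaSpec d σ) (hd : d (Sum.inl i) = j) :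
    ∃ p, σ.symm^[p] (Sum.inr j) = Sum.inl i ∧
      ∀ q, 1 ≤ q → q ≤ p → ∃ i₂ ≤ i, σ.symm^[q] (Sum.inr j) = Sum.inl i₂ := by
  induction i using WellFoundedLT.induction with
  | ind i ih =>
  rcases exists_sigma_symm_eq_inl hσ i with ⟨i₂, hlt, hd₂, hi⟩ | ⟨t, ht, hi⟩
  · obtain ⟨p, hp, hbelow⟩ := ih i₂ hlt (hd₂.trans hd)
    have hp' : σ.symm^[p + 1] (Sum.inr j) = Sum.inl i := by
      rw [Function.iterate_succ_apply', hp, hi]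
    refine ⟨p + 1, hp', fun q hq hqp => ?_⟩
    rcases hqp.lt_or_eq with hqp | rfl
    · obtain ⟨i₃, hle, hi₃⟩ := hbelow q hq (Nat.le_of_lt_succ hqp)
      exact ⟨i₃, hle.trans hlt.le, hi₃⟩
    · exact ⟨i, le_rfl, hp'⟩
  · obtain rfl : t = j := Fin.ext (Int.ofNat_inj.1 (ht.trans hd))
    refine ⟨1, hi, fun q hq hq1 => ⟨i, le_rfl, ?_⟩⟩
    rw [le_antisymm hq1 hq, Function.iterate_one, hi]

theorem begin_vee_le (hσ : D.SigmaSpec d σ) (hvee : D.VeeSpec d σ vee) (hd : d (Sum.inl i) = j)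
    (he : (D.iseg i).e ≠ (D.jseg j).e) :
    (D.segOf (vee (Sum.inr j))).b ≤ (D.iseg i).b := by
  obtain ⟨p, hp, hbelow⟩ := exists_symm_iterate_eq_inl hσ hd
  have hep : (D.segOf (σ.symm^[p] (Sum.inr j))).e ≠ (D.segOf (Sum.inr j)).e := by
    rw [hp]
    exact he
  obtain ⟨r, hr, hrp, hv⟩ := exists_vee_eq_symm_iterate hvee hep
  obtain ⟨i₂, hle, hi₂⟩ := hbelow r hr hrp
  rw [hv, hi₂]
  exact D.monotone_begin hle

end KVData

/-- Lemma `lem:import`(2).  Let `(𝔩,𝔪)` be a permissible pair with the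
algorithm notations in place.  Let `j ∈ J` and `i' ∈ I` be indices such that
`e(Δ_j) = e(Δ_{i'})` and `b(Δ_{i'}) ≤ b(Δ_{j^∨})`.  Then `𝔡(i') = 𝔡(j)`. -/
theorem import_lemma_part2 (D : KVData) (d' : Fin D.n → ℕ)
    (d : Fin D.n ⊕ Fin D.l → ℤ) (σ : Equiv.Perm (Fin D.n ⊕ Fin D.l))
    (vee : Fin D.n ⊕ Fin D.l → Fin D.n ⊕ Fin D.l)
    (hdep : D.DepthSpec d' d) (hσ : D.SigmaSpec d σ) (hvee : D.VeeSpec d σ vee)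
    (j : Fin D.l) (i' : Fin D.n)
    (he : (D.jseg j).e = (D.iseg i').e)
    (hb : (D.iseg i').b ≤ (D.segOf (vee (Sum.inr j))).b) :
    d (Sum.inl i') = d (Sum.inr j) := by
  rw [hdep.2.2]
  have hle : d (Sum.inl i') ≤ j := (KVData.depth_le_dPrime hdep i').trans <|
    Int.ofNat_le.2 (KVData.le_of_isGreatest_dPrimeSet_of_end_le (hdep.1 i') he.le)
  have hbj : (D.iseg i').b ≤ (D.jseg j).b := hb.trans <|
    KVData.begin_le_of_depth_eq hdep ((KVData.depth_vee hdep hσ hvee _).trans (hdep.2.2 j))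
  by_contra hne
  obtain ⟨i, hll, hd⟩ := KVData.exists_ll_depth_eq hdep hbj he.ge (lt_of_le_of_ne hle hne)
  have hvi : (D.segOf (vee (Sum.inr j))).b ≤ (D.iseg i).b :=
    KVData.begin_vee_le hσ hvee hd (hll.2.trans_eq he.symm).ne
  exact (hb.trans hvi).not_gt hll.1
end

section
/- Let 𝔪 be a nonzero multisegment with RSK-transform (𝔩_1,…,𝔩_d). Then 𝔟(𝔪) = 𝔟(𝔩_1) + … + 𝔟(𝔩_d) and 𝔢(𝔪) = 𝔢(𝔩_1) + … + 𝔢(𝔩_d) in Q₊. In particular |𝔩_1| + … + |𝔩_d| = |𝔪|, so the tuple of lengths λ(𝔪) = (|𝔩_1|,…,|𝔩_d|) is a partition of the integer |𝔪|. -/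
/-- `𝔫 = K'(𝔩, 𝔪)` for the inverse Knuth–Viennot algorithm: there is an indexing of
the permissible pair `(𝔩, 𝔪)` as in `KVData`, together with depth functions, the
permutation `σ` and the segments `Δ♣_x = Δ(b(Δ_x), e(Δ_{σ(x)}))`, realizing
`𝔫 = Σ_{x ∈ I ∪ J} Δ♣_x`. -/
def IsKnuthStep (𝔩 𝔪 𝔫 : Multiset Segment) : Prop :=
  ∃ (D : KVData) (d' : Fin D.n → ℕ) (d : Fin D.n ⊕ Fin D.l → ℤ)
    (σ : Equiv.Perm (Fin D.n ⊕ Fin D.l)) (club : Fin D.n ⊕ Fin D.l → Segment),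
    D.DepthSpec d' d ∧ D.SigmaSpec d σ ∧
    (∀ x, (club x).b = (D.segOf x).b) ∧ (∀ x, (club x).e = (D.segOf (σ x)).e) ∧
    𝔪 = D.mSeg ∧ 𝔩 = D.lSeg ∧ 𝔫 = Multiset.map club Finset.univ.val

/-- A ladder multisegment: a nonzero multisegment whose segments can be enumerated
`Δ_l ≪ Δ_{l-1} ≪ ⋯ ≪ Δ_1`. -/
def IsLadderM (𝔩 : Multiset Segment) : Prop :=
  ∃ (k : ℕ) (f : Fin k → Segment), 0 < k ∧
    (∀ s t : Fin k, s < t → Segment.ll (f t) (f s)) ∧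
    𝔩 = Multiset.map f Finset.univ.val

/-- The width `ω(𝔫)`: the minimal number of ladder multisegments whose sum is `𝔫`. -/
noncomputable def widthM (𝔫 : Multiset Segment) : ℕ :=
  sInf {k : ℕ | ∃ f : Fin k → Multiset Segment, (∀ j, IsLadderM (f j)) ∧ 𝔫 = ∑ j, f j}

/-- `C(𝔪₁, 𝔪₂) = #{(i,j) : b(Δ¹_i) = e(Δ²_j) + 1}`, pairs counted with multiplicity. -/
def Cfun (𝔫₁ 𝔫₂ : Multiset Segment) : ℕ :=
  Multiset.card ((Multiset.product 𝔫₁ 𝔫₂).filter fun p => p.1.b = p.2.e + 1)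

/-- `𝔟(𝔫) ∈ Q₊`: the multiset of begin points (`Q₊`, the free commutative monoid on
the symbols `α_i`, `i ∈ ℤ`, is realized as `Multiset ℤ`). -/
def bwt (𝔫 : Multiset Segment) : Multiset ℤ := Multiset.map Segment.b 𝔫

/-- `𝔢(𝔫) ∈ Q₊`: the multiset of end points. -/
def ewt (𝔫 : Multiset Segment) : Multiset ℤ := Multiset.map Segment.e 𝔫

theorem eq_sum_range_add_of_eq_add_succ {M : Type*} [AddCommMonoid M] {u v : ℕ → M} {N : ℕ}
    (h : ∀ k < N, u k = v k + u (k + 1)) : u 0 = ∑ k ∈ Finset.range N, v k + u N := by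
  induction N with
  | zero => simp
  | succ N ih =>
    calc u 0 = ∑ k ∈ Finset.range N, v k + u N := ih fun k hk => h k (hk.trans N.lt_add_one)
      _ = ∑ k ∈ Finset.range N, v k + (v N + u (N + 1)) := by rw [← h N N.lt_add_one]
      _ = ∑ k ∈ Finset.range (N + 1), v k + u (N + 1) := by
        rw [Finset.sum_range_succ, add_assoc]

theorem bwt_add (𝔪 𝔫 : Multiset Segment) : bwt (𝔪 + 𝔫) = bwt 𝔪 + bwt 𝔫 :=
  Multiset.map_add _ _ _

theorem ewt_add (𝔪 𝔫 : Multiset Segment) : ewt (𝔪 + 𝔫) = ewt 𝔪 + ewt 𝔫 :=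
  Multiset.map_add _ _ _

theorem card_bwt (𝔫 : Multiset Segment) : (bwt 𝔫).card = 𝔫.card :=
  Multiset.card_map _ _

theorem bwt_map_congr {ι : Type*} {f g : ι → Segment} {s : Multiset ι}
    (h : ∀ x ∈ s, (f x).b = (g x).b) : bwt (s.map f) = bwt (s.map g) := by
  simp only [bwt, Multiset.map_map]
  exact Multiset.map_congr rfl h

theorem ewt_map_univ_eq_of_perm {ι : Type*} [Fintype ι] {f g : ι → Segment} (σ : Equiv.Perm ι)
    (h : ∀ x, (f x).e = (g (σ x)).e) :
    ewt (Finset.univ.val.map f) = ewt (Finset.univ.val.map g) := by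
  calc ewt (Finset.univ.val.map f)
      = (Finset.univ.val.map σ).map fun x => (g x).e := by
        simp only [ewt, Multiset.map_map, Function.comp_apply, h]
    _ = ewt (Finset.univ.val.map g) := by
        simp only [Multiset.map_univ_val_equiv, ewt, Multiset.map_map, Function.comp_apply]

theorem KVData.map_segOf_univ (D : KVData) :
    Finset.univ.val.map D.segOf = D.lSeg + D.mSeg := by
  rw [← Finset.univ_disjSum_univ, Finset.val_disjSum, Multiset.disjSum, Multiset.map_add,
    add_comm, Multiset.map_map, Multiset.map_map]
  rfl

namespace IsKnuthStep

variable {𝔩 𝔪 𝔫 : Multiset Segment}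

theorem bwt_eq (h : IsKnuthStep 𝔩 𝔪 𝔫) : bwt 𝔫 = bwt 𝔩 + bwt 𝔪 := by
  obtain ⟨D, _, _, _, _, _, _, hb, _, rfl, rfl, rfl⟩ := h
  rw [bwt_map_congr fun x _ => hb x, D.map_segOf_univ, bwt_add]

theorem ewt_eq (h : IsKnuthStep 𝔩 𝔪 𝔫) : ewt 𝔫 = ewt 𝔩 + ewt 𝔪 := by
  obtain ⟨D, _, _, σ, _, _, _, _, he, rfl, rfl, rfl⟩ := h
  rw [ewt_map_univ_eq_of_perm σ he, D.map_segOf_univ, ewt_add]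

end IsKnuthStep

theorem rsk_transform_preserves_ends_general {𝔩 ms : ℕ → Multiset Segment} {N : ℕ}
    (hstep : ∀ k < N, IsKnuthStep (𝔩 k) (ms (k + 1)) (ms k)) :
    bwt (ms 0) = ∑ k ∈ Finset.range N, bwt (𝔩 k) + bwt (ms N) ∧
    ewt (ms 0) = ∑ k ∈ Finset.range N, ewt (𝔩 k) + ewt (ms N) ∧
    (ms 0).card = ∑ k ∈ Finset.range N, (𝔩 k).card + (ms N).card := by
  have hb : bwt (ms 0) = ∑ k ∈ Finset.range N, bwt (𝔩 k) + bwt (ms N) :=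
    eq_sum_range_add_of_eq_add_succ (u := fun k => bwt (ms k)) fun k hk => (hstep k hk).bwt_eq
  have he : ewt (ms 0) = ∑ k ∈ Finset.range N, ewt (𝔩 k) + ewt (ms N) :=
    eq_sum_range_add_of_eq_add_succ (u := fun k => ewt (ms k)) fun k hk => (hstep k hk).ewt_eq
  refine ⟨hb, he, ?_⟩
  simpa only [Multiset.card_add, Multiset.card_sum, card_bwt] using congrArg Multiset.card hb

/-- Proposition `eq:preser`.  Let `𝔪` be a nonzero multisegment with
RSK-transform `(𝔩_1, …, 𝔩_d)`, i.e. there are multisegments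
`𝔪 = 𝔪_0, 𝔪_1, …, 𝔪_{d-1}` with `𝔪_{k-1} = K'(𝔩_k, 𝔪_k)` for `1 ≤ k ≤ d-1`
(each pair `(𝔩_k, 𝔪_k)` permissible) and `𝔪_{d-1} = 𝔩_d` a ladder.  Then
`𝔟(𝔪) = 𝔟(𝔩_1) + … + 𝔟(𝔩_d)` and `𝔢(𝔪) = 𝔢(𝔩_1) + … + 𝔢(𝔩_d)` in `Q₊`; in
particular `|𝔩_1| + … + |𝔩_d| = |𝔪|`, so the tuple of lengths is a partition of the
integer `|𝔪|`.  (Here `𝔩 k`, `ms k`, for `0 ≤ k < d`, stand for `𝔩_{k+1}`, `𝔪_k`.) -/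
theorem rsk_transform_preserves_ends (𝔪 : Multiset Segment) (h𝔪 : 𝔪 ≠ 0)
    (dd : ℕ) (hdd : 0 < dd) (𝔩 ms : ℕ → Multiset Segment)
    (hms0 : ms 0 = 𝔪)
    (hstep : ∀ k, k < dd - 1 → IsKnuthStep (𝔩 k) (ms (k + 1)) (ms k))
    (hlast : ms (dd - 1) = 𝔩 (dd - 1)) (hlad : IsLadderM (𝔩 (dd - 1))) :
    bwt 𝔪 = ∑ k ∈ Finset.range dd, bwt (𝔩 k) ∧
    ewt 𝔪 = ∑ k ∈ Finset.range dd, ewt (𝔩 k) ∧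
    Multiset.card 𝔪 = ∑ k ∈ Finset.range dd, Multiset.card (𝔩 k) := by
  simpa only [hms0, hlast, ← Finset.sum_range_succ, Nat.sub_add_cancel hdd] using
    rsk_transform_preserves_ends_general hstep
end

section
/- Let (𝔩,𝔪) be a permissible pair with 𝔪 a nonzero multisegment. Then the width of the multisegment K'(𝔩,𝔪) produced by the inverse Knuth–Viennot algorithm satisfies ω(K'(𝔩,𝔪)) = ω(𝔪) + 1. -/
/-! ### Width as a chromatic number -/

section Width

open Finset

namespace Segment

/-- Two segments are comparable if they can occur together in a ladder, that is, if neither of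
them contains the other. -/
def Comparable (Δ Δ' : Segment) : Prop := ll Δ Δ' ∨ ll Δ' Δ

instance : Std.Symm Comparable := ⟨fun _ _ => Or.symm⟩

end Segment

theorem isLadderM_iff_pairwise_comparable {𝔩 : Multiset Segment} :
    IsLadderM 𝔩 ↔ 𝔩 ≠ 0 ∧ 𝔩.Pairwise Segment.Comparable := by
  constructor
  · rintro ⟨k, f, hk, hf, rfl⟩
    exact ⟨by simp [hk.ne'], List.ofFn f, Fin.univ_val_map f,
      List.pairwise_ofFn.2 fun s t hst => .inr (hf s t hst)⟩
  · rintro ⟨hne, L, rfl, hL⟩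
    let L' := L.mergeSort (·.b ≥ ·.b)
    have hperm : L'.Perm L := List.mergeSort_perm L _
    have hsorted : L'.Pairwise (·.b ≥ ·.b) := by
      simpa using List.pairwise_mergeSort (le := fun Δ Δ' : Segment => decide (Δ.b ≥ Δ'.b))
        (by simpa using fun _ _ _ h h' => le_trans h' h) (by simpa using fun _ _ => le_total _ _) L
    have hladder : L'.Pairwise fun Δ Δ' => Segment.ll Δ' Δ :=
      hsorted.imp₂ (fun _ _ hb h => h.resolve_left fun hlt => hb.not_gt hlt.1)
        (hL.perm hperm.symm Or.symm)
    refine ⟨L'.length, L'.get, ?_, List.pairwise_iff_get.1 hladder, ?_⟩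
    · simpa [hperm.length_eq, List.length_pos_iff] using hne
    · rw [Fin.univ_val_map, List.ofFn_get, Multiset.coe_eq_coe]
      exact hperm.symm

theorem isLadderM_map_iff {ι : Type*} {f : ι → Segment} {s : Finset ι} :
    IsLadderM (s.val.map f) ↔
      s.Nonempty ∧ (s : Set ι).Pairwise fun x y => (f x).Comparable (f y) := by
  have : Std.Symm fun x y => (f x).Comparable (f y) := ⟨fun _ _ => Or.symm⟩
  rw [isLadderM_iff_pairwise_comparable, ← coe_toList s, Multiset.map_coe,
    Multiset.pairwise_coe_iff_pairwise, List.pairwise_map, ← (s.nodup_toList).pairwise_coe]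
  simp [nonempty_iff_ne_empty]

/-- The graph on the indices of a family of segments whose independent sets are the ladders. -/
def incomparabilityGraph {ι : Type*} (f : ι → Segment) : SimpleGraph ι where
  Adj x y := x ≠ y ∧ ¬ (f x).Comparable (f y)
  symm := ⟨fun _ _ h => ⟨h.1.symm, fun h' => h.2 h'.symm⟩⟩
  loopless := ⟨fun _ h => h.1 rfl⟩

theorem exists_map_filter_of_map_eq_sum {ι κ α : Type*} [Fintype κ] [DecidableEq κ] [Nonempty κ]
    {f : ι → α} {s : Finset ι} {F : κ → Multiset α} (h : s.val.map f = ∑ j, F j) :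
    ∃ C : ι → κ, ∀ j, F j = (s.filter (C · = j)).val.map f := by
  classical
  induction s using Finset.induction_on generalizing F with
  | empty =>
    have hF : ∀ j, F j = 0 := by simpa [eq_comm (a := (0 : Multiset α))] using h
    exact ⟨fun _ => Classical.arbitrary κ, by simp [hF]⟩
  | insert a s ha ih =>
    rw [insert_val_of_notMem ha, Multiset.map_cons] at h
    obtain ⟨j₀, -, hj₀⟩ : ∃ j ∈ univ, f a ∈ F j :=
      Multiset.mem_sum.1 (h ▸ Multiset.mem_cons_self _ _)
    obtain ⟨M, hM⟩ := Multiset.exists_cons_of_mem hj₀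
    have hsum : s.val.map f = ∑ j, Function.update F j₀ M j := by
      rw [sum_update_of_mem (mem_univ j₀), ← Multiset.cons_inj_right (f a), h,
        ← Multiset.cons_add, ← hM, sdiff_singleton_eq_erase, add_sum_erase _ _ (mem_univ j₀)]
    obtain ⟨C, hC⟩ := ih hsum
    refine ⟨Function.update C a j₀, fun j => ?_⟩
    have hfilter : s.filter (Function.update C a j₀ · = j) = s.filter (C · = j) :=
      filter_congr fun x hx => by rw [Function.update_of_ne (ne_of_mem_of_not_mem hx ha)]
    rw [filter_insert, hfilter, Function.update_self]
    rcases eq_or_ne j₀ j with rfl | hj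
    · rw [if_pos rfl, insert_val_of_notMem (by simp [ha]), Multiset.map_cons, ← hC, hM,
        Function.update_self]
    · rw [if_neg hj, ← hC, Function.update_of_ne hj.symm]

variable {ι κ : Type*} [Fintype ι] {f : ι → Segment}

theorem colorable_incomparabilityGraph_of_map_eq_sum [Fintype κ] {F : κ → Multiset Segment}
    (hF : ∀ j, IsLadderM (F j)) (hsum : univ.val.map f = ∑ j, F j) :
    (incomparabilityGraph f).Colorable (Fintype.card κ) := by
  classical
  rcases isEmpty_or_nonempty ι with hι | ⟨⟨x⟩⟩
  · exact .of_isEmpty _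
  have hx : f x ∈ ∑ j, F j := hsum ▸ Multiset.mem_map_of_mem f (mem_univ_val x)
  obtain ⟨j, -, -⟩ := Multiset.mem_sum.1 hx
  have : Nonempty κ := ⟨j⟩
  obtain ⟨C, hC⟩ := exists_map_filter_of_map_eq_sum hsum
  let C' : (incomparabilityGraph f).Coloring κ := .mk C fun {x y} hxy hC_eq => hxy.2 <| by
    have hladder := hF (C x)
    rw [hC, isLadderM_map_iff] at hladder
    exact hladder.2 (by simp) (by simp [hC_eq]) hxy.1
  exact C'.colorable

theorem exists_map_eq_sum_of_colorable {k : ℕ} (hk : (incomparabilityGraph f).Colorable k) :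
    ∃ n ≤ k, ∃ F : Fin n → Multiset Segment, (∀ j, IsLadderM (F j)) ∧
      univ.val.map f = ∑ j, F j := by
  have hfinite := hk.chromaticNumber_le.trans_lt (ENat.natCast_lt_top k)
  obtain ⟨n, hn⟩ := ENat.ne_top_iff_exists.1 hfinite.ne
  obtain ⟨C⟩ := SimpleGraph.chromaticNumber_le_iff_colorable.1 hn.ge
  refine ⟨n, by simpa [← hn] using hk.chromaticNumber_le,
    fun j => (univ.filter (C · = j)).val.map f, fun j => ?_, ?_⟩
  · obtain ⟨x, hx⟩ :=
      (SimpleGraph.chromaticNumber_eq_iff_forall_surjective ⟨C⟩).1 hn.symm C j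
    refine isLadderM_map_iff.2 ⟨⟨x, by simpa using hx⟩, fun x hx y hy hxy => ?_⟩
    by_contra hcomp
    simp only [coe_filter, mem_univ, true_and, Set.mem_ofPred_eq] at hx hy
    exact C.valid ⟨hxy, hcomp⟩ (hx.trans hy.symm)
  · have hmap (s : Finset ι) : s.val.map f = ∑ x ∈ s, {f x} := by
      rw [← Multiset.sum_map_singleton (s.val.map f), Multiset.map_map]
      rfl
    simp only [hmap, sum_fiberwise]

theorem widthM_le_iff_colorable {k : ℕ} :
    widthM (univ.val.map f) ≤ k ↔ (incomparabilityGraph f).Colorable k := by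
  constructor
  · intro hk
    obtain ⟨n, -, hn⟩ :=
      exists_map_eq_sum_of_colorable (incomparabilityGraph f).colorable_of_fintype
    obtain ⟨F, hF, hsum⟩ : ∃ F : Fin (widthM (univ.val.map f)) → Multiset Segment,
        (∀ j, IsLadderM (F j)) ∧ univ.val.map f = ∑ j, F j :=
      Nat.sInf_mem (s := {k | ∃ F : Fin k → Multiset Segment, _ ∧ _}) ⟨n, hn⟩
    exact .mono (by simpa using hk) (colorable_incomparabilityGraph_of_map_eq_sum hF hsum)
  · intro hk
    obtain ⟨n, hnk, hn⟩ := exists_map_eq_sum_of_colorable hk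
    exact (Nat.sInf_le hn).trans hnk

end Width

/-! ### Interlacing chains -/

section Chains

variable {ι κ P : Type*} [Preorder P]

/-- The comparability graph of a family of points of a preorder; its cliques are the chains. -/
def comparabilityGraph (p : ι → P) : SimpleGraph ι where
  Adj x y := p x < p y ∨ p y < p x
  symm := ⟨fun _ _ => Or.symm⟩
  loopless := ⟨fun _ => by simp⟩

theorem colorable_comparabilityGraph_iff {p : ι → P} {k : ℕ} :
    (comparabilityGraph p).Colorable k ↔
      ∀ (m : ℕ) (s : Fin m → ι), StrictMono (p ∘ s) → m ≤ k := by
  constructor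
  · intro hk m s hs
    simpa using hk.card_le_of_pairwise_adj s fun i j hij => hij.lt_or_gt.imp (@hs i j) (@hs j i)
  · intro hchain
    let : Preorder ι := Preorder.lift p
    have hheight (x : ι) : Order.height x < k := by
      have hpos : 0 < k := hchain 1 (fun _ => x) (Subsingleton.strictMono _)
      refine (Order.height_le (n := (k - 1 : ℕ)) fun s _ => ?_).trans_lt ?_
      · exact_mod_cast Nat.le_sub_one_of_lt (hchain _ s s.strictMono)
      · exact_mod_cast Nat.sub_one_lt hpos.ne'
    choose c hc using fun x => ENat.ne_top_iff_exists.1 (hheight x).ne_top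
    have hlt {x y : ι} (hxy : p x < p y) : c x < c y := by
      have := Order.height_strictMono (show x < y from hxy) (hheight x).lt_top
      rwa [← hc, ← hc, Nat.cast_lt] at this
    refine (SimpleGraph.colorable_iff_exists_bdd_nat_coloring k).2
      ⟨.mk c fun {x y} hxy => ?_, fun x => ?_⟩
    · exact hxy.elim (fun h => (hlt h).ne) fun h => (hlt h).ne'
    · have := hheight x
      rwa [← hc, Nat.cast_lt] at this

variable {p : ι → P} {q : κ → P}

theorem exists_chain_of_interlaced (h : ∀ x y, q x < q y → ∃ i, q x < p i ∧ p i ≤ q y) {m : ℕ}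
    {s : Fin (m + 1) → κ} (hs : StrictMono (q ∘ s)) : ∃ u : Fin m → ι, StrictMono (p ∘ u) := by
  choose u hu_gt hu_le using fun r : Fin m => h _ _ (hs (Fin.castSucc_lt_succ (i := r)))
  exact ⟨u, fun r r' hr => (hu_le r).trans_lt ((hs.monotone hr).trans_lt (hu_gt r'))⟩

theorem exists_chain_succ_of_interlaced [Nonempty κ]
    (h : ∀ i i', p i < p i' → ∃ x, p i < q x ∧ q x ≤ p i')
    (hbot : ∀ i, ∃ x, q x ≤ p i) (htop : ∀ i, ∃ x, p i < q x) {m : ℕ}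
    {s : Fin m → ι} (hs : StrictMono (p ∘ s)) :
    ∃ u : Fin (m + 1) → κ, StrictMono (q ∘ u) := by
  have hu (r : Fin (m + 1)) : ∃ x, (∀ k, k.castSucc < r → p (s k) < q x) ∧
      ∀ k, r ≤ k.castSucc → q x ≤ p (s k) := by
    have hgt {k₀ : Fin m} {x : κ} (hx : p (s k₀) < q x) (k : Fin m) (hk : k ≤ k₀) :
        p (s k) < q x := (hs.monotone hk).trans_lt hx
    have hle {k₀ : Fin m} {x : κ} (hx : q x ≤ p (s k₀)) (k : Fin m) (hk : k₀ ≤ k) :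
        q x ≤ p (s k) := hx.trans (hs.monotone hk)
    by_cases hr₀ : r = 0 <;> by_cases hrm : r = Fin.last m
    · obtain rfl : m = 0 := by simpa [hr₀, Fin.ext_iff, eq_comm] using hrm
      exact ⟨Classical.arbitrary κ, (·.elim0), (·.elim0)⟩
    · obtain ⟨x, hx⟩ := hbot (s (r.castPred hrm))
      exact ⟨x, by simp [hr₀], fun k hk => hle hx k (by simpa)⟩
    · obtain ⟨x, hx⟩ := htop (s (r.pred hr₀))
      subst hrm
      exact ⟨x, fun k _ => hgt hx k (by grind), fun k hk => absurd hk k.castSucc_lt_last.not_ge⟩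
    · obtain ⟨x, hx, hx'⟩ := h _ _ (hs (Fin.pred_lt_castPred hr₀ hrm))
      exact ⟨x, fun k hk => hgt hx k (by grind), fun k hk => hle hx' k (by simpa)⟩
  choose u hu_gt hu_le using hu
  exact ⟨u, fun r r' hr => (hu_le r (r.castLT (by omega)) (by simp)).trans_lt
    (hu_gt r' (r.castLT (by omega)) (by simpa))⟩

theorem colorable_comparabilityGraph_succ_iff [Nonempty κ]
    (hq : ∀ x y, q x < q y → ∃ i, q x < p i ∧ p i ≤ q y)
    (hp : ∀ i i', p i < p i' → ∃ x, p i < q x ∧ q x ≤ p i')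
    (hbot : ∀ i, ∃ x, q x ≤ p i) (htop : ∀ i, ∃ x, p i < q x) {k : ℕ} :
    (comparabilityGraph q).Colorable (k + 1) ↔ (comparabilityGraph p).Colorable k := by
  rw [colorable_comparabilityGraph_iff, colorable_comparabilityGraph_iff]
  constructor <;> intro hchain m s hs
  · obtain ⟨u, hu⟩ := exists_chain_succ_of_interlaced hp hbot htop hs
    exact Nat.succ_le_succ_iff.1 (hchain (m + 1) u hu)
  · cases m with
    | zero => exact Nat.zero_le _
    | succ m =>
      obtain ⟨u, hu⟩ := exists_chain_of_interlaced hq hs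
      exact Nat.succ_le_succ (hchain m u hu)

/-- The position of each member of a family of intervals in the containment order, given keys `β`
and `ε` refining their begin and end points. -/
def nestKey {L₁ L₂ : Type*} (β : ι → L₁) (ε : ι → L₂) (x : ι) : L₁ᵒᵈ × L₂ :=
  (OrderDual.toDual (β x), ε x)

variable {L₁ L₂ : Type*} [LinearOrder L₁] [LinearOrder L₂] {β : ι → L₁} {ε : ι → L₂}

theorem nestKey_lt_nestKey_iff (hβ : β.Injective) (hε : ε.Injective) {x y : ι} :
    nestKey β ε x < nestKey β ε y ↔ β y < β x ∧ ε x < ε y := by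
  rw [nestKey, nestKey, Prod.mk_lt_mk, OrderDual.toDual_lt_toDual, OrderDual.toDual_le_toDual,
    le_iff_lt_or_eq, le_iff_lt_or_eq, hβ.eq_iff, hε.eq_iff]
  grind

theorem incomparabilityGraph_eq_comparabilityGraph_nestKey {f : ι → Segment}
    (hβ : β.Injective) (hε : ε.Injective) (hb : ∀ x y, β x < β y → (f x).b ≤ (f y).b)
    (he : ∀ x y, ε x < ε y → (f x).e ≤ (f y).e)
    (hll : ∀ x y, β x < β y → ε x < ε y → Segment.ll (f x) (f y)) :
    incomparabilityGraph f = comparabilityGraph (nestKey β ε) := by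
  have hnested {x y : ι} (h : β y < β x) (h' : ε x < ε y) : ¬ (f x).Comparable (f y) := by
    have := hb _ _ h
    have := he _ _ h'
    grind [Segment.Comparable, Segment.ll]
  ext x y
  simp only [incomparabilityGraph, comparabilityGraph, nestKey_lt_nestKey_iff hβ hε]
  constructor
  · rintro ⟨hxy, hcomp⟩
    rcases lt_or_gt_of_ne (hβ.ne hxy) with h | h <;> rcases lt_or_gt_of_ne (hε.ne hxy) with h' | h'
    exacts [(hcomp (.inl (hll _ _ h h'))).elim, .inr ⟨h, h'⟩, .inl ⟨h, h'⟩,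
      (hcomp (.inr (hll _ _ h h'))).elim]
  · rintro (⟨h, h'⟩ | ⟨h, h'⟩)
    exacts [⟨ne_of_apply_ne β h.ne', hnested h h'⟩,
      ⟨ne_of_apply_ne β h.ne, fun hcomp => hnested h h' hcomp.symm⟩]

end Chains

/-! ### Depth and the containment order of the segments -/

namespace KVData

open Sum

variable {D : KVData} {d' : Fin D.n → ℕ} {d : Fin D.n ⊕ Fin D.l → ℤ}
  {σ : Equiv.Perm (Fin D.n ⊕ Fin D.l)}

theorem e_le_of_lt {i i' : Fin D.n} (h : i < i') (hb : (D.iseg i).b = (D.iseg i').b) :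
    (D.iseg i').e ≤ (D.iseg i).e :=
  ((D.iOrder i' i h).resolve_left hb.not_lt).2

theorem b_mono : Monotone fun i => (D.iseg i).b := fun i i' h => by
  rcases h.eq_or_lt with rfl | h
  · rfl
  · exact (D.iOrder i' i h).elim le_of_lt fun h => h.1.le

theorem jseg_le_jseg {t t' : Fin D.l} (h : t ≤ t') :
    (D.jseg t').b ≤ (D.jseg t).b ∧ (D.jseg t').e ≤ (D.jseg t).e := by
  rcases h.eq_or_lt with rfl | h
  · exact ⟨le_rfl, le_rfl⟩
  · exact ⟨(D.ladder t t' h).1.le, (D.ladder t t' h).2.le⟩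

theorem mem_dPrimeSet_iff {i : Fin D.n} {t : Fin D.l} :
    (t : ℕ) ∈ D.dPrimeSet i ↔
      (D.iseg i).b ≤ (D.jseg t).b ∧ (D.iseg i).e ≤ (D.jseg t).e := by
  simp [dPrimeSet, Segment.ll, Segment.shiftDown]

namespace DepthSpec

theorem depth_le (hd : D.DepthSpec d' d) (i : Fin D.n) : d (inl i) ≤ d' i :=
  (hd.2.1 i).2 ⟨0, fun _ => i, rfl, by simp, by simp⟩

theorem depth_add_one_le (hd : D.DepthSpec d' d) {i i' : Fin D.n}
    (h : Segment.ll (D.iseg i') (D.iseg i)) : d (inl i) + 1 ≤ d (inl i') := by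
  obtain ⟨k, c, rfl, hc, hk⟩ := (hd.2.1 i').1
  rw [hk]
  have := (hd.2.1 i).2 ⟨k + 1, fun r => r.casesOn i c, rfl, fun r hr => ?_, rfl⟩
  · push_cast at this
    linarith
  · cases r with
    | zero => exact h
    | succ r => exact hc r (by omega)

theorem le_jseg (hd : D.DepthSpec d' d) {i : Fin D.n} {t : Fin D.l} (h : (t : ℤ) ≤ d (inl i)) :
    (D.iseg i).b ≤ (D.jseg t).b ∧ (D.iseg i).e ≤ (D.jseg t).e := by
  have hmem := (hd.1 i).1
  obtain ⟨hlt, -⟩ := id hmem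
  obtain ⟨hb, he⟩ := mem_dPrimeSet_iff (t := ⟨d' i, hlt⟩) |>.1 hmem
  have hle : t ≤ ⟨d' i, hlt⟩ := by exact_mod_cast h.trans (hd.depth_le i)
  exact ⟨hb.trans (jseg_le_jseg hle).1, he.trans (jseg_le_jseg hle).2⟩

theorem chain_bounds (hd : D.DepthSpec d' d) {k : ℕ} {c : ℕ → Fin D.n}
    (hc : ∀ r < k, Segment.ll (D.iseg (c (r + 1))) (D.iseg (c r))) {r s : ℕ} (hrs : r ≤ s)
    (hs : s ≤ k) :
    (D.iseg (c s)).b ≤ (D.iseg (c r)).b ∧ (D.iseg (c s)).e ≤ (D.iseg (c r)).e ∧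
      d (inl (c r)) + (s - r : ℕ) ≤ d (inl (c s)) := by
  induction s, hrs using Nat.le_induction with
  | base => simp
  | succ s hrs ih =>
    obtain ⟨hb, he, hdepth⟩ := ih (by omega)
    have hstep := hc s (by omega)
    have := hd.depth_add_one_le hstep
    exact ⟨hstep.1.le.trans hb, hstep.2.le.trans he, by omega⟩

theorem exists_ll_or_jseg_lt (hd : D.DepthSpec d' d) {i : Fin D.n} {t : Fin D.l}
    (h : d (inl i) < t) :
    (∃ i', d (inl i') = t ∧ Segment.ll (D.iseg i') (D.iseg i)) ∨
      (D.jseg t).b < (D.iseg i).b ∨ (D.jseg t).e < (D.iseg i).e := by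
  -- Along a chain attaining the minimum `𝔡(i)` the depth grows by exactly one at each step. Either
  -- it takes the value `t`, or the last segment of the chain is not dominated by `Δ_{j_t}`.
  obtain ⟨k, c, rfl, hc, hk⟩ := (hd.2.1 i).1
  by_cases ht : t ≤ d' (c k)
  · have hmin := hd.depth_le (c k)
    obtain ⟨r, hr⟩ : ∃ r : ℕ, (t : ℤ) = d (inl (c 0)) + (r + 1) :=
      ⟨(t - d (inl (c 0)) - 1).toNat, by omega⟩
    have hrk : r + 1 ≤ k := by omega
    obtain ⟨-, -, hlower⟩ := hd.chain_bounds hc (Nat.zero_le (r + 1)) hrk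
    obtain ⟨-, -, hupper⟩ := hd.chain_bounds hc hrk le_rfl
    obtain ⟨hb, he, -⟩ := hd.chain_bounds hc (Nat.le_add_left 1 r) hrk
    have hstep := hc 0 (by omega)
    exact .inl ⟨c (r + 1), by omega, hb.trans_lt hstep.1, he.trans_lt hstep.2⟩
  · right
    obtain ⟨hb, he, -⟩ := hd.chain_bounds hc (Nat.zero_le k) le_rfl
    by_contra! hle
    exact ht ((hd.1 (c k)).2 (mem_dPrimeSet_iff.2 ⟨hb.trans hle.1, he.trans hle.2⟩))

end DepthSpec

namespace SigmaSpec

theorem exists_eq_depth (hs : D.SigmaSpec d σ) (i : Fin D.n) : ∃ t : Fin D.l, d (inl i) = t := by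
  induction i using WellFoundedLT.induction with
  | ind i ih =>
    obtain ⟨i', hi', -⟩ | ⟨-, t, ht, -⟩ := hs.1 i
    · exact hi'.1.2 ▸ ih i' hi'.1.1
    · exact ⟨t, ht.symm⟩

theorem depth_sigma (hd : D.DepthSpec d' d) (hs : D.SigmaSpec d σ) (x : Fin D.n ⊕ Fin D.l) :
    d (σ x) = d x := by
  rcases x with i | t
  · obtain ⟨i', hi', h⟩ | ⟨-, t, ht, h⟩ := hs.1 i
    · rw [h, hi'.1.2]
    · rw [h, hd.2.2, ht]
  · obtain ⟨i, hi, h⟩ | ⟨-, h⟩ := hs.2 t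
    · rw [h, hi.1, hd.2.2]
    · rw [h]

end SigmaSpec

theorem exists_eq_depth (hd : D.DepthSpec d' d) (hs : D.SigmaSpec d σ) (x : Fin D.n ⊕ Fin D.l) :
    ∃ t : Fin D.l, d x = t :=
  x.rec hs.exists_eq_depth fun t => ⟨t, hd.2.2 t⟩

theorem segOf_le_jseg (hd : D.DepthSpec d' d) {x : Fin D.n ⊕ Fin D.l} {t : Fin D.l}
    (h : t ≤ d x) : (D.segOf x).b ≤ (D.jseg t).b ∧ (D.segOf x).e ≤ (D.jseg t).e := by
  rcases x with i | t'
  · exact hd.le_jseg h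
  · exact jseg_le_jseg (by simpa [hd.2.2] using h)

theorem segOf_ll_jseg (hd : D.DepthSpec d' d) (hs : D.SigmaSpec d σ) {x : Fin D.n ⊕ Fin D.l}
    {t : Fin D.l} (h : t < d x) : Segment.ll (D.segOf x) (D.jseg t) := by
  obtain ⟨t', ht'⟩ := exists_eq_depth hd hs x
  obtain ⟨hb, he⟩ := segOf_le_jseg hd ht'.ge
  obtain ⟨hb', he'⟩ := D.ladder t t' (by rw [ht'] at h; exact_mod_cast h)
  exact ⟨hb.trans_lt hb', he.trans_lt he'⟩

/-- Orders `I ⊔ J` by begin point; among equal begin points `I` keeps its order and precedes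
`J`. -/
def begKey (x : Fin D.n ⊕ Fin D.l) : ℤ ×ₗ WithTop (Fin D.n) :=
  toLex ((D.segOf x).b, Sum.elim (↑) (fun _ => ⊤) x)

/-- Orders `I ⊔ J` by end point; among equal end points `I` is in reverse order and precedes
`J`. -/
def endKey (x : Fin D.n ⊕ Fin D.l) : ℤ ×ₗ WithTop (Fin D.n)ᵒᵈ :=
  toLex ((D.segOf x).e, Sum.elim (fun i => WithTop.some (OrderDual.toDual i)) (fun _ => ⊤) x)

theorem begKey_lt_of_b_lt {x y : Fin D.n ⊕ Fin D.l} (h : (D.segOf x).b < (D.segOf y).b) :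
    begKey x < begKey y :=
  Prod.Lex.toLex_lt_toLex.2 (.inl h)

theorem endKey_lt_of_e_lt {x y : Fin D.n ⊕ Fin D.l} (h : (D.segOf x).e < (D.segOf y).e) :
    endKey x < endKey y :=
  Prod.Lex.toLex_lt_toLex.2 (.inl h)

theorem b_le_of_begKey_le {x y : Fin D.n ⊕ Fin D.l} (h : begKey x ≤ begKey y) :
    (D.segOf x).b ≤ (D.segOf y).b :=
  le_of_not_gt fun h' => h.not_gt (begKey_lt_of_b_lt h')

theorem e_le_of_endKey_le {x y : Fin D.n ⊕ Fin D.l} (h : endKey x ≤ endKey y) :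
    (D.segOf x).e ≤ (D.segOf y).e :=
  le_of_not_gt fun h' => h.not_gt (endKey_lt_of_e_lt h')

theorem begKey_inl_strictMono : StrictMono fun i : Fin D.n => D.begKey (inl i) := fun i i' h =>
  Prod.Lex.toLex_lt_toLex.2 <| (b_mono h.le).lt_or_eq.imp_right (⟨·, by simpa⟩)

theorem endKey_inl_lt_inl {i i' : Fin D.n} (h : i < i') (he : (D.iseg i').e ≤ (D.iseg i).e) :
    endKey (inl i') < endKey (inl i) :=
  Prod.Lex.toLex_lt_toLex.2 <| he.lt_or_eq.imp_right (⟨·, by simpa⟩)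

theorem begKey_inl_lt_inr {i : Fin D.n} {t : Fin D.l} (hb : (D.iseg i).b ≤ (D.jseg t).b) :
    begKey (inl i) < begKey (inr t) :=
  Prod.Lex.toLex_lt_toLex.2 <| hb.lt_or_eq.imp_right (⟨·, by simp⟩)

theorem endKey_inl_lt_inr {i : Fin D.n} {t : Fin D.l} (he : (D.iseg i).e ≤ (D.jseg t).e) :
    endKey (inl i) < endKey (inr t) :=
  Prod.Lex.toLex_lt_toLex.2 <| he.lt_or_eq.imp_right (⟨·, by simp⟩)

theorem begKey_le_inr (hd : D.DepthSpec d' d) {x : Fin D.n ⊕ Fin D.l} {t : Fin D.l}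
    (h : t ≤ d x) : begKey x ≤ begKey (inr t) := by
  have hb := (segOf_le_jseg hd h).1
  rcases x with i | t'
  · exact (begKey_inl_lt_inr hb).le
  · exact Prod.Lex.toLex_le_toLex.2 (hb.lt_or_eq.imp_right (⟨·, le_rfl⟩))

theorem begKey_injective : Function.Injective D.begKey := by
  have hj : Function.Injective fun t => (D.jseg t).b :=
    StrictAnti.injective fun t t' h => (D.ladder t t' h).1
  rintro (i | t) (i' | t') h <;> obtain ⟨hb, htie⟩ := Prod.mk.inj (toLex.injective h)
  · simpa using htie
  · simp at htie
  · simp at htie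
  · exact congrArg inr (hj hb)

theorem endKey_injective : Function.Injective D.endKey := by
  have hj : Function.Injective fun t => (D.jseg t).e :=
    StrictAnti.injective fun t t' h => (D.ladder t t' h).2
  rintro (i | t) (i' | t') h <;> obtain ⟨he, htie⟩ := Prod.mk.inj (toLex.injective h)
  · simpa using htie
  · simp at htie
  · simp at htie
  · exact congrArg inr (hj he)

theorem endKey_inl_lt_inl_of_depth_eq (hd : D.DepthSpec d' d) {i i' : Fin D.n} (h : i < i')
    (heq : d (inl i) = d (inl i')) : endKey (inl i') < endKey (inl i) := by
  refine endKey_inl_lt_inl h ?_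
  rcases (b_mono h.le).lt_or_eq with hb | hb
  · by_contra! he
    have := hd.depth_add_one_le ⟨hb, he⟩
    omega
  · exact e_le_of_lt h hb

theorem begKey_lt_of_sigma_eq_inl (hd : D.DepthSpec d' d) (hs : D.SigmaSpec d σ)
    {x : Fin D.n ⊕ Fin D.l} {i : Fin D.n} (h : σ x = inl i) : begKey (inl i) < begKey x := by
  rcases x with i₀ | t
  · obtain ⟨i', hi', h'⟩ | ⟨-, t, -, h'⟩ := hs.1 i₀
    · obtain rfl := inl.inj (h.symm.trans h')
      exact begKey_inl_strictMono hi'.1.1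
    · simp [h] at h'
  · have hdepth := hs.depth_sigma hd (inr t)
    rw [h, hd.2.2] at hdepth
    exact begKey_inl_lt_inr (hd.le_jseg hdepth.ge).1

theorem endKey_inl_lt_sigma (hd : D.DepthSpec d' d) (hs : D.SigmaSpec d σ) (i : Fin D.n) :
    endKey (inl i) < endKey (σ (inl i)) := by
  obtain ⟨i', hi', h⟩ | ⟨-, t, ht, h⟩ := hs.1 i <;> rw [h]
  · exact endKey_inl_lt_inl_of_depth_eq hd hi'.1.1 hi'.1.2
  · exact endKey_inl_lt_inr (hd.le_jseg ht.le).2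

theorem begKey_le_or_endKey_sigma_le_of_depth_eq (hd : D.DepthSpec d' d) (hs : D.SigmaSpec d σ)
    {i : Fin D.n} {x : Fin D.n ⊕ Fin D.l} (h : d (inl i) = d x) :
    begKey x ≤ begKey (inl i) ∨ endKey (σ x) ≤ endKey (inl i) := by
  have hend {i' : Fin D.n} (hle : i ≤ i') (heq : d (inl i') = d x) :
      endKey (inl i') ≤ endKey (inl i) := by
    rcases hle.eq_or_lt with rfl | hlt
    · rfl
    · exact (endKey_inl_lt_inl_of_depth_eq hd hlt (h.trans heq.symm)).le
  rcases x with i₀ | t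
  · rcases le_or_gt i₀ i with hle | hlt
    · exact .inl (begKey_inl_strictMono.monotone hle)
    · obtain ⟨i', hi', h'⟩ | ⟨hempty, -⟩ := hs.1 i₀
      · exact .inr (h' ▸ hend (hi'.2 ⟨hlt, h⟩) hi'.1.2)
      · exact (hempty ⟨i, hlt, h⟩).elim
  · rw [hd.2.2] at h hend
    obtain ⟨i', hi', h'⟩ | ⟨hempty, -⟩ := hs.2 t
    · exact .inr (h' ▸ hend (hi'.2 h) hi'.1)
    · exact (hempty ⟨i, h⟩).elim

theorem b_lt_or_e_sigma_lt_of_depth_lt (hd : D.DepthSpec d' d) (hs : D.SigmaSpec d σ)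
    {i : Fin D.n} {x : Fin D.n ⊕ Fin D.l} (h : d (inl i) < d x) :
    (D.segOf x).b < (D.iseg i).b ∨ (D.segOf (σ x)).e < (D.iseg i).e := by
  obtain ⟨t, ht⟩ := exists_eq_depth hd hs x
  obtain ⟨i', hi', hb, he⟩ | hlt := hd.exists_ll_or_jseg_lt (ht ▸ h)
  · refine (begKey_le_or_endKey_sigma_le_of_depth_eq hd hs (hi'.trans ht.symm)).imp ?_ ?_
    · exact fun hle => (b_le_of_begKey_le hle).trans_lt hb
    · exact fun hle => (e_le_of_endKey_le hle).trans_lt he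
  · refine hlt.imp (segOf_le_jseg hd ht.ge).1.trans_lt (segOf_le_jseg hd ?_).2.trans_lt
    rw [hs.depth_sigma hd, ht]

theorem begKey_le_or_endKey_sigma_le (hd : D.DepthSpec d' d) (hs : D.SigmaSpec d σ)
    {i : Fin D.n} {x : Fin D.n ⊕ Fin D.l} (h : d (inl i) ≤ d x) :
    begKey x ≤ begKey (inl i) ∨ endKey (σ x) ≤ endKey (inl i) := by
  rcases h.eq_or_lt with h | h
  · exact begKey_le_or_endKey_sigma_le_of_depth_eq hd hs h
  · exact (b_lt_or_e_sigma_lt_of_depth_lt hd hs h).imp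
      (fun hb => (begKey_lt_of_b_lt hb).le) fun he => (endKey_lt_of_e_lt he).le

/-- The position of `Δ_i` in the containment order of segments, ties broken by `begKey` and
`endKey`; comparable with the values of `clubKey`. -/
def segKey : Fin D.n → (ℤ ×ₗ WithTop (Fin D.n))ᵒᵈ × (ℤ ×ₗ WithTop (Fin D.n)ᵒᵈ) :=
  nestKey (D.begKey ∘ inl) (D.endKey ∘ inl)

/-- The position of `Δ♣_x` in the containment order of segments, ties broken by `begKey` and
`endKey ∘ σ`. -/
def clubKey (σ : Equiv.Perm (Fin D.n ⊕ Fin D.l)) :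
    Fin D.n ⊕ Fin D.l → (ℤ ×ₗ WithTop (Fin D.n))ᵒᵈ × (ℤ ×ₗ WithTop (Fin D.n)ᵒᵈ) :=
  nestKey D.begKey (D.endKey ∘ σ)

theorem clubKey_lt_clubKey_iff {x y : Fin D.n ⊕ Fin D.l} :
    clubKey σ x < clubKey σ y ↔ begKey y < begKey x ∧ endKey (σ x) < endKey (σ y) :=
  nestKey_lt_nestKey_iff begKey_injective (endKey_injective.comp σ.injective)

theorem segKey_lt_segKey_iff {i i' : Fin D.n} :
    segKey i < segKey i' ↔
      begKey (inl i') < begKey (inl i) ∧ endKey (inl i) < endKey (inl i') :=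
  nestKey_lt_nestKey_iff (begKey_injective.comp inl_injective)
    (endKey_injective.comp inl_injective)

theorem clubKey_symm_le_segKey (hd : D.DepthSpec d' d) (hs : D.SigmaSpec d σ) (i : Fin D.n) :
    clubKey σ (σ.symm (inl i)) ≤ segKey i :=
  Prod.mk_le_mk.2 ⟨(begKey_lt_of_sigma_eq_inl hd hs (σ.apply_symm_apply _)).le, by simp⟩

theorem segKey_lt_clubKey (hd : D.DepthSpec d' d) (hs : D.SigmaSpec d σ) (i : Fin D.n) :
    segKey i < clubKey σ (inl i) :=
  Prod.mk_lt_mk.2 (.inr ⟨le_rfl, endKey_inl_lt_sigma hd hs i⟩)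

theorem exists_segKey_between (hd : D.DepthSpec d' d) (hs : D.SigmaSpec d σ)
    {x z : Fin D.n ⊕ Fin D.l} (h : clubKey σ x < clubKey σ z) :
    ∃ i, clubKey σ x < segKey i ∧ segKey i ≤ clubKey σ z := by
  obtain ⟨hb, he⟩ := clubKey_lt_clubKey_iff.1 h
  rcases lt_or_ge (d x) (d z) with hlt | hle
  · rcases hx : σ x with i | t
    · have hdepth := hs.depth_sigma hd x
      rw [hx] at he hdepth
      have hbeg := begKey_lt_of_sigma_eq_inl hd hs hx
      refine ⟨i, Prod.mk_lt_mk.2 (.inl ⟨hbeg, by simp [hx]⟩), ?_, he.le⟩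
      refine (b_lt_or_e_sigma_lt_of_depth_lt hd hs (hdepth ▸ hlt)).elim
        (fun h => (begKey_lt_of_b_lt h).le) fun h => ?_
      exact absurd (endKey_lt_of_e_lt h) he.not_gt
    · have hdepth := hs.depth_sigma hd x
      rw [hx, hd.2.2] at hdepth
      rw [← hdepth, ← hs.depth_sigma hd z] at hlt
      rw [hx] at he
      exact absurd (endKey_lt_of_e_lt (segOf_ll_jseg hd hs hlt).2) he.not_gt
  · rcases z with i | t
    · refine ⟨i, Prod.mk_lt_mk.2 (.inl ⟨hb, ?_⟩), (segKey_lt_clubKey hd hs i).le⟩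
      exact (begKey_le_or_endKey_sigma_le hd hs hle).resolve_left hb.not_ge
    · exact absurd (begKey_le_inr hd (hd.2.2 t ▸ hle)) hb.not_ge

theorem exists_clubKey_between (hd : D.DepthSpec d' d) (hs : D.SigmaSpec d σ)
    {i i' : Fin D.n} (h : segKey i' < segKey i) :
    ∃ x, segKey i' < clubKey σ x ∧ clubKey σ x ≤ segKey i := by
  obtain ⟨hb, he⟩ := segKey_lt_segKey_iff.1 h
  rcases le_or_gt (d (inl i)) (d (inl i')) with hle | hlt
  · refine ⟨inl i', segKey_lt_clubKey hd hs i', hb.le, ?_⟩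
    exact (begKey_le_or_endKey_sigma_le hd hs hle).resolve_left hb.not_ge
  · have hdepth := hs.depth_sigma hd (σ.symm (inl i))
    rw [σ.apply_symm_apply] at hdepth
    refine ⟨σ.symm (inl i), Prod.mk_lt_mk.2 (.inr ⟨?_, by simpa⟩),
      clubKey_symm_le_segKey hd hs i⟩
    refine (b_lt_or_e_sigma_lt_of_depth_lt hd hs (hdepth ▸ hlt)).elim
      (fun h => (begKey_lt_of_b_lt h).le) fun h => ?_
    rw [σ.apply_symm_apply] at h
    exact absurd (endKey_lt_of_e_lt h) he.not_gt

theorem iseg_ll_of_begKey_lt_of_endKey_lt {i i' : Fin D.n} (hb : begKey (inl i) < begKey (inl i'))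
    (he : endKey (inl i) < endKey (inl i')) : Segment.ll (D.iseg i) (D.iseg i') := by
  have h := begKey_inl_strictMono.lt_iff_lt.1 hb
  have he' : (D.iseg i).e < (D.iseg i').e := by
    by_contra! hle
    exact he.not_gt (endKey_inl_lt_inl h hle)
  exact ⟨(b_mono h.le).lt_of_ne fun heq => he'.not_ge (e_le_of_lt h heq), he'⟩

theorem depth_lt_of_begKey_lt_of_endKey_sigma_lt (hd : D.DepthSpec d' d) (hs : D.SigmaSpec d σ)
    {x y : Fin D.n ⊕ Fin D.l} (hb : begKey x < begKey y) (he : endKey (σ x) < endKey (σ y)) :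
    d y < d x := by
  by_contra! hle
  rcases x with i | t
  · refine (begKey_le_or_endKey_sigma_le hd hs hle).elim hb.not_ge fun h => ?_
    exact (h.trans_lt (endKey_inl_lt_sigma hd hs i)).not_gt he
  · exact hb.not_ge (begKey_le_inr hd (hd.2.2 t ▸ hle))

theorem b_lt_of_begKey_lt_of_endKey_sigma_lt (hd : D.DepthSpec d' d) (hs : D.SigmaSpec d σ)
    {x y : Fin D.n ⊕ Fin D.l} (hb : begKey x < begKey y) (he : endKey (σ x) < endKey (σ y)) :
    (D.segOf x).b < (D.segOf y).b := by
  have hdepth := depth_lt_of_begKey_lt_of_endKey_sigma_lt hd hs hb he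
  rcases y with i | t
  · by_contra! hle
    have hlt := (b_lt_or_e_sigma_lt_of_depth_lt hd hs hdepth).resolve_left hle.not_gt
    rcases x with i' | t
    · have hi := begKey_inl_strictMono.lt_iff_lt.1 hb
      have hie := e_le_of_lt hi (le_antisymm (b_mono hi.le) hle)
      exact hlt.not_ge (hie.trans (e_le_of_endKey_le (endKey_inl_lt_sigma hd hs i').le))
    · exact hb.not_gt (begKey_inl_lt_inr hle)
  · exact (segOf_ll_jseg hd hs (hd.2.2 t ▸ hdepth)).1

theorem e_sigma_lt_of_begKey_lt_of_endKey_sigma_lt (hd : D.DepthSpec d' d) (hs : D.SigmaSpec d σ)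
    {x y : Fin D.n ⊕ Fin D.l} (hb : begKey x < begKey y) (he : endKey (σ x) < endKey (σ y)) :
    (D.segOf (σ x)).e < (D.segOf (σ y)).e := by
  have hdepth := depth_lt_of_begKey_lt_of_endKey_sigma_lt hd hs hb he
  rw [← hs.depth_sigma hd y] at hdepth
  rcases hy : σ y with i | t <;> rw [hy] at he hdepth
  · by_contra! hle
    have hlt := (b_lt_or_e_sigma_lt_of_depth_lt hd hs hdepth).resolve_right hle.not_gt
    rcases hx : σ x with i' | t <;> rw [hx] at he hle
    · have hi' := b_le_of_begKey_le (begKey_lt_of_sigma_eq_inl hd hs hx).le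
      refine he.not_gt (endKey_inl_lt_inl ?_ hle)
      exact b_mono.reflect_lt (hi'.trans_lt hlt)
    · exact he.not_gt (endKey_inl_lt_inr hle)
  · rw [← hs.depth_sigma hd x, hd.2.2] at hdepth
    exact (segOf_ll_jseg hd hs hdepth).2

theorem incomparabilityGraph_iseg_eq :
    incomparabilityGraph D.iseg = comparabilityGraph D.segKey :=
  incomparabilityGraph_eq_comparabilityGraph_nestKey (begKey_injective.comp inl_injective)
    (endKey_injective.comp inl_injective) (fun _ _ h => b_le_of_begKey_le h.le)
    (fun _ _ h => e_le_of_endKey_le h.le) fun _ _ => iseg_ll_of_begKey_lt_of_endKey_lt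

theorem incomparabilityGraph_club_eq (hd : D.DepthSpec d' d) (hs : D.SigmaSpec d σ)
    {club : Fin D.n ⊕ Fin D.l → Segment} (hb : ∀ x, (club x).b = (D.segOf x).b)
    (he : ∀ x, (club x).e = (D.segOf (σ x)).e) :
    incomparabilityGraph club = comparabilityGraph (clubKey σ) :=
  incomparabilityGraph_eq_comparabilityGraph_nestKey begKey_injective
    (endKey_injective.comp σ.injective)
    (fun x y h => by rw [hb, hb]; exact b_le_of_begKey_le h.le)
    (fun x y h => by rw [he, he]; exact e_le_of_endKey_le h.le)
    (fun x y h h' => by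
      rw [Segment.ll, hb, hb, he, he]
      exact ⟨b_lt_of_begKey_lt_of_endKey_sigma_lt hd hs h h',
        e_sigma_lt_of_begKey_lt_of_endKey_sigma_lt hd hs h h'⟩)

theorem colorable_comparabilityGraph_clubKey_succ_iff (hd : D.DepthSpec d' d)
    (hs : D.SigmaSpec d σ) {k : ℕ} :
    (comparabilityGraph (clubKey σ)).Colorable (k + 1) ↔
      (comparabilityGraph D.segKey).Colorable k :=
  have : Nonempty (Fin D.n ⊕ Fin D.l) := ⟨inr ⟨0, D.lpos⟩⟩
  colorable_comparabilityGraph_succ_iff (fun _ _ => exists_segKey_between hd hs)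
    (fun _ _ => exists_clubKey_between hd hs)
    (fun i => ⟨_, clubKey_symm_le_segKey hd hs i⟩) fun i => ⟨_, segKey_lt_clubKey hd hs i⟩

end KVData

/-- Let `(𝔩,𝔪)` be a permissible pair with `𝔪` a nonzero
multisegment.  Then the width of the multisegment `K'(𝔩,𝔪)` produced by the inverse
Knuth–Viennot algorithm satisfies `ω(K'(𝔩,𝔪)) = ω(𝔪) + 1`. -/
theorem knuth_step_width (𝔩 𝔪 𝔫 : Multiset Segment) (h : IsKnuthStep 𝔩 𝔪 𝔫) :
    widthM 𝔫 = widthM 𝔪 + 1 := by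
  obtain ⟨D, d', d, σ, club, hd, hs, hb, he, rfl, rfl, rfl⟩ := h
  have hclub (k : ℕ) : widthM (Finset.univ.val.map club) ≤ k ↔
      (comparabilityGraph (KVData.clubKey σ)).Colorable k := by
    rw [widthM_le_iff_colorable, KVData.incomparabilityGraph_club_eq hd hs hb he]
  have hseg (k : ℕ) : widthM D.mSeg ≤ k ↔ (comparabilityGraph D.segKey).Colorable k := by
    rw [KVData.mSeg, widthM_le_iff_colorable, KVData.incomparabilityGraph_iseg_eq]
  refine eq_of_forall_ge_iff fun k => ?_
  rw [hclub]
  cases k with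
  | zero =>
    have : Nonempty (Fin D.n ⊕ Fin D.l) := ⟨.inr ⟨0, D.lpos⟩⟩
    simp [SimpleGraph.colorable_zero_iff]
  | succ k =>
    rw [KVData.colorable_comparabilityGraph_clubKey_succ_iff hd hs, ← hseg, Nat.succ_le_succ_iff]
end
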